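/- Let n ≥ 3. An operator Y : 𝒫ⁿ → ℝⁿ is a Borel measurable (with respect to the topology of the Hausdorff metric) and SL(n) covariant valuation if and only if there exist real constants c₁, c₂ such that Y(Q) = c₁ m(Q) + c₂ m([0,Q]) for every Q ∈ 𝒫ⁿ, where [0,Q] denotes the convex hull of Q ∪ {0}. -/

import Mathlib

open MeasureTheory Filter Set Topology TopologicalSpace
open scoped ENNReal

noncomputable section

/-- `ℝⁿ` with the Euclidean norm. -/
abbrev En (n : ℕ) := EuclideanSpace ℝ (Fin n)

/-- `φ : ℝ → ℝ` is a Young function (viewed as a function on `[0,∞)`):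
`φ t = ∫₀ᵗ ψ(s) ds` for a non-decreasing, right-continuous `ψ` with `ψ 0 = 0`,
`ψ s > 0` for `s > 0` and `ψ s → ∞` as `s → ∞`. -/
def IsYoung (φ : ℝ → ℝ) : Prop :=
  ∃ ψ : ℝ → ℝ, (∀ s : ℝ, 0 ≤ s → 0 ≤ ψ s) ∧ MonotoneOn ψ (Set.Ici 0) ∧
    (∀ s : ℝ, 0 ≤ s → ContinuousWithinAt ψ (Set.Ici s) s) ∧
    ψ 0 = 0 ∧ (∀ s : ℝ, 0 < s → 0 < ψ s) ∧
    Tendsto ψ atTop atTop ∧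
    (∀ t : ℝ, 0 ≤ t → φ t = ∫ s in (0:ℝ)..t, ψ s)

/-- The complementary Young function `φ*(t) = sup_{s ≥ 0} (s t − φ s)`. -/
def conjYoung (φ : ℝ → ℝ) (t : ℝ) : ℝ :=
  sSup {y : ℝ | ∃ s : ℝ, 0 ≤ s ∧ y = s * t - φ s}

/-- The measure `μₙ(M) = ∫_M |x| dx`. -/
def mun {n : ℕ} (M : Set (En n)) : ℝ≥0∞ :=
  ∫⁻ x in M, ENNReal.ofReal ‖x‖

/-- Membership in the Orlicz space `L^φ(ℝⁿ, |x|dx)`: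
`h` is measurable and `∫ φ(δ|h(x)|)|x| dx < ∞` for every `δ > 0`. -/
def MemOrlicz {n : ℕ} (φ : ℝ → ℝ) (h : En n → ℝ) : Prop :=
  Measurable h ∧ ∀ δ : ℝ, 0 < δ →
    ∫⁻ x : En n, ENNReal.ofReal (φ (δ * |h x|)) * ENNReal.ofReal ‖x‖ < ⊤

/-- The Orlicz norm
`‖h‖_φ = sup { ∫ |h g| |x| dx : g measurable, ∫ φ*(|g|)|x| dx ≤ 1 }` (valued in `[0,∞]`). -/
def orliczNorm {n : ℕ} (φ : ℝ → ℝ) (h : En n → ℝ) : ℝ≥0∞ :=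
  ⨆ g ∈ {g : En n → ℝ | Measurable g ∧
      ∫⁻ x : En n, ENNReal.ofReal (conjYoung φ |g x|) * ENNReal.ofReal ‖x‖ ≤ 1},
    ∫⁻ x : En n, ENNReal.ofReal |h x * g x| * ENNReal.ofReal ‖x‖

/-- The moment vector `m(Q) = ∫_Q x dx` of a set `Q ⊆ ℝⁿ`. -/
def momentSet {n : ℕ} (Q : Set (En n)) : En n := ∫ x in Q, x

/-- The action of an `n × n` matrix on `ℝⁿ`. -/
def matVec {n : ℕ} (ϑ : Matrix (Fin n) (Fin n) ℝ) (x : En n) : En n :=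
  Matrix.toEuclideanLin ϑ x

/-- A compact convex polytope: the convex hull of a nonempty finite set. -/
def IsPolytope {n : ℕ} (Q : Set (En n)) : Prop :=
  ∃ S : Finset (En n), S.Nonempty ∧ Q = convexHull ℝ (S : Set (En n))

/-- The space of polytopes, topologized via the Hausdorff metric on nonempty
compact subsets of `ℝⁿ`. -/
abbrev PolySp (n : ℕ) := {K : NonemptyCompacts (En n) // IsPolytope (K : Set (En n))}

/-- `Y` is a valuation on polytopes. -/
def IsPolyValuation {n : ℕ} (Y : Set (En n) → En n) : Prop :=
  ∀ Q₁ Q₂ : Set (En n), IsPolytope Q₁ → IsPolytope Q₂ → IsPolytope (Q₁ ∪ Q₂) →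
    IsPolytope (Q₁ ∩ Q₂) → Y Q₁ + Y Q₂ = Y (Q₁ ∪ Q₂) + Y (Q₁ ∩ Q₂)

/-- `Y` is `SL(n)` covariant on polytopes: `Y(ϑ Q) = ϑ (Y Q)` for `det ϑ = 1`. -/
def IsPolySLCovariant {n : ℕ} (Y : Set (En n) → En n) : Prop :=
  ∀ Q : Set (En n), IsPolytope Q → ∀ ϑ : Matrix (Fin n) (Fin n) ℝ, ϑ.det = 1 →
    Y (matVec ϑ '' Q) = matVec ϑ (Y Q)

/-- `Ψ` is a valuation on `L^φ(ℝⁿ, |x|dx)`. -/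
def IsOrliczValuation {n : ℕ} (φ : ℝ → ℝ) (Ψ : (En n → ℝ) → En n) : Prop :=
  ∀ h₁ h₂ : En n → ℝ, MemOrlicz φ h₁ → MemOrlicz φ h₂ →
    Ψ (fun x => max (h₁ x) (h₂ x)) + Ψ (fun x => min (h₁ x) (h₂ x)) = Ψ h₁ + Ψ h₂

/-- `Ψ` is `SL(n)` covariant: `Ψ(h ∘ ϑ⁻¹) = ϑ (Ψ h)` for `det ϑ = 1`. -/
def IsOrliczSLCovariant {n : ℕ} (φ : ℝ → ℝ) (Ψ : (En n → ℝ) → En n) : Prop :=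
  ∀ h : En n → ℝ, MemOrlicz φ h → ∀ ϑ : Matrix (Fin n) (Fin n) ℝ, ϑ.det = 1 →
    Ψ (fun x => h (matVec ϑ⁻¹ x)) = matVec ϑ (Ψ h)

/-- `Ψ` is continuous: `Ψ(h_k) → Ψ(h)` whenever `‖h_k − h‖_φ → 0`. -/
def OrliczContinuous {n : ℕ} (φ : ℝ → ℝ) (Ψ : (En n → ℝ) → En n) : Prop :=
  ∀ (hk : ℕ → En n → ℝ) (h : En n → ℝ), (∀ k, MemOrlicz φ (hk k)) → MemOrlicz φ h →
    Tendsto (fun k => orliczNorm φ (fun x => hk k x - h x)) atTop (𝓝 0) →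
    Tendsto (fun k => Ψ (hk k)) atTop (𝓝 (Ψ h))

/-- `Ψ` identifies functions that agree almost everywhere. -/
def RespectsAE {n : ℕ} (φ : ℝ → ℝ) (Ψ : (En n → ℝ) → En n) : Prop :=
  ∀ h₁ h₂ : En n → ℝ, MemOrlicz φ h₁ → MemOrlicz φ h₂ →
    (∀ᵐ x : En n, h₁ x = h₂ x) → Ψ h₁ = Ψ h₂

/-- The `Δ₂` condition: `φ(2t) ≤ C φ(t)` for all `t ≥ T`. -/
def SatisfiesDelta2 (φ : ℝ → ℝ) : Prop :=
  ∃ T C : ℝ, 0 ≤ T ∧ 0 < C ∧ ∀ t : ℝ, T ≤ t → φ (2 * t) ≤ C * φ t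

/-- A closed cube in `ℝⁿ`: `{x : cᵢ ≤ xᵢ ≤ dᵢ}` with all side lengths equal. -/
def IsClosedCube {n : ℕ} (C : Set (En n)) : Prop :=
  ∃ c d : Fin n → ℝ, (∃ L : ℝ, 0 ≤ L ∧ ∀ i, d i - c i = L) ∧
    C = {x : En n | ∀ i, c i ≤ x i ∧ x i ≤ d i}

/-!
Modulo its values on polytopes contained in a hyperplane avoiding the origin and on the pyramids
with apex `0` over them, a valuation vanishes: cutting a polytope along hyperplanes through the
origin sorts the inequalities that describe it, so that in each piece only one upper bound
`u x ≤ 1` and one lower bound `1 ≤ l x` matter, and such a frustum is a difference of two pyramids.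
Triangulating by induction on the dimension, an `SL(n)` covariant valuation `Y` is determined by its
values on simplices whose vertices, apart possibly from `0`, are linearly independent, that is, on
the linear images of `S = conv {e_i : i ∈ I}` and of `S = conv {0, e_i : i ∈ I}`.

By covariance `M⁻¹ Y(M S)` depends only on `D = det M`, and the shears and transpositions preserving
`S` force it to have equal coordinates on `I` and zero coordinates off `I`. A hyperplane through a
point of the edge `e_a e_b` splits `S` into two linear images of itself, which gives linear
equations in `D` whose only solutions are `|D| Y(S)` for full `I` and `0` for smaller `I`.
Hence `Y` is determined by two multiples of `(1, …, 1)`, and a combination of `m(Q)` and `m([0,Q])`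
matches both.

Conversely, `[0, ·]` commutes with unions and intersections of polytopes whose union is convex, so
that `m([0,Q])` is a valuation, and Borel measurability follows from Fubini's theorem for the closed
set `{(K, x) : x ∈ K}`.
-/

section PolyhedralCone

open PointedCone

variable {𝕜 M E : Type*} [Field 𝕜] [LinearOrder 𝕜] [IsStrictOrderedRing 𝕜]
  [AddCommGroup M] [Module 𝕜 M] [AddCommGroup E] [Module 𝕜 E]

lemma smul_sub_smul_mem_hull_image2 (f : Module.Dual 𝕜 E) {S T : Set E} {x y : E}
    (hx : x ∈ hull 𝕜 S) (hy : y ∈ hull 𝕜 T) :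
    f x • y - f y • x ∈ hull 𝕜 (image2 (fun v w => f v • w - f w • v) S T) := by
  induction hx, hy using Submodule.span_induction₂ with
  | mem_mem v w hv hw => exact subset_hull (mem_image2_of_mem hv hw)
  | zero_left => simp
  | zero_right => simp
  | add_left x₁ x₂ y _ _ _ h₁ h₂ =>
    convert add_mem h₁ h₂ using 1
    simp only [map_add]; module
  | add_right x y₁ y₂ _ _ _ h₁ h₂ =>
    convert add_mem h₁ h₂ using 1
    simp only [map_add]; module
  | smul_left r x y _ _ h =>
    obtain ⟨r, hr⟩ := r
    convert smul_mem _ hr h using 1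
    simp only [Nonneg.mk_smul, map_smul, smul_eq_mul]; module
  | smul_right r x y _ _ h =>
    obtain ⟨r, hr⟩ := r
    convert smul_mem _ hr h using 1
    simp only [Nonneg.mk_smul, map_smul, smul_eq_mul]; module

lemma eq_zero_or_neg_of_mem_hull {f : Module.Dual 𝕜 E} {T : Set E} (hT : ∀ w ∈ T, f w < 0)
    {y : E} (hy : y ∈ hull 𝕜 T) : y = 0 ∨ f y < 0 := by
  induction hy using Submodule.span_induction with
  | mem w hw => exact .inr (hT w hw)
  | zero => exact .inl rfl
  | add y₁ y₂ _ _ h₁ h₂ =>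
    rcases h₁ with rfl | h₁
    · simpa using h₂
    · rcases h₂ with rfl | h₂
      · simpa using Or.inr h₁
      · exact .inr (by simpa using add_neg h₁ h₂)
  | smul r y _ h =>
    rcases h with rfl | h
    · simp
    · rcases eq_or_ne r 0 with rfl | hr
      · simp
      · right
        exact (map_smul f r.1 y).trans_lt
          (mul_neg_of_pos_of_neg (lt_of_le_of_ne' r.2 (hr <| Subtype.ext ·)) h)

/-- The Fourier–Motzkin generators of the part of a finitely generated cone lying in a
half-space. -/
lemma hull_inf_dual_singleton (f : Module.Dual 𝕜 E) (S : Set E) :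
    hull 𝕜 S ⊓ dual .id {f} = hull 𝕜 ({v ∈ S | 0 ≤ f v} ∪
      image2 (fun v w => f v • w - f w • v) {v ∈ S | 0 ≤ f v} {w ∈ S | f w < 0}) := by
  set P := {v ∈ S | 0 ≤ f v}
  set N := {w ∈ S | f w < 0}
  apply le_antisymm
  · rintro x ⟨hx, hfx⟩
    replace hfx : 0 ≤ f x := hfx rfl
    have hS : S ⊆ P ∪ N := fun v hv => (le_or_gt 0 (f v)).imp (⟨hv, ·⟩) (⟨hv, ·⟩)
    rw [hull, Submodule.span_union]
    obtain ⟨p, hp, q, hq, rfl⟩ : ∃ p ∈ hull 𝕜 P, ∃ q ∈ hull 𝕜 N, p + q = x := by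
      rw [← Submodule.mem_sup, ← Submodule.span_union]
      exact Submodule.span_mono hS hx
    rcases eq_zero_or_neg_of_mem_hull (fun w hw => hw.2) hq with rfl | hfq
    · simpa using Submodule.mem_sup_left hp
    rw [map_add] at hfx
    have hfp : 0 < f p := by linarith
    have decomposition : p + q = ((f p + f q) / f p) • p + (f p)⁻¹ • (f p • q - f q • p) := by
      match_scalars <;> field_simp
      ring
    rw [decomposition]
    exact Submodule.add_mem_sup (smul_mem _ (by positivity) hp)
      (smul_mem _ (by positivity) (smul_sub_smul_mem_hull_image2 f hp hq))
  · refine Submodule.span_le.2 ?_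
    rintro _ (⟨hvS, hv⟩ | ⟨v, ⟨hvS, hv⟩, w, ⟨hwS, hw⟩, rfl⟩)
    · exact ⟨subset_hull hvS, fun _ h => by rw [h]; exact hv⟩
    · refine ⟨?_, ?_⟩
      · beta_reduce
        rw [SetLike.mem_coe, sub_eq_add_neg, ← neg_smul]
        exact add_mem (smul_mem _ hv (subset_hull hwS))
          (smul_mem _ (by linarith) (subset_hull hvS))
      · rintro _ rfl
        simp [mul_comm]

theorem fg_dual_of_finite [Module.Finite 𝕜 E] (p : M →ₗ[𝕜] E →ₗ[𝕜] 𝕜) {s : Set M}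
    (hs : s.Finite) : (dual p s).FG := by
  induction s, hs using Set.Finite.induction_on with
  | empty =>
    rw [dual_empty]
    exact (Module.Finite.fg_top (R := 𝕜) (M := E)).restrictScalars
  | @insert a s _ _ ih =>
    obtain ⟨S, hS⟩ := ih
    have halfspace : dual p {a} = dual .id {p a} := by rw [dual_eq_dual_id_image, image_singleton]
    rw [dual_insert, inf_comm, halfspace, ← hS]
    refine (hull_inf_dual_singleton (p a) (S : Set E)).symm ▸ Submodule.fg_span ?_
    exact (S.finite_toSet.sep _).union
      ((S.finite_toSet.sep _).image2 _ (S.finite_toSet.sep _))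

end PolyhedralCone

section Polytope

/-- A convex polytope in a real vector space: the convex hull of a nonempty finite set. -/
def IsConvexPolytope {E : Type*} [AddCommGroup E] [Module ℝ E] (Q : Set E) : Prop :=
  ∃ S : Finset E, S.Nonempty ∧ Q = convexHull ℝ (S : Set E)

/-- A polyhedron: the solution set of finitely many affine inequalities, the pair `(φ, c)`
standing for `0 ≤ φ x + c`. -/
def IsPolyhedron {E : Type*} [AddCommGroup E] [Module ℝ E] (P : Set E) : Prop :=
  ∃ R : Finset (Module.Dual ℝ E × ℝ), P = {x | ∀ r ∈ R, 0 ≤ r.1 x + r.2}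

section Algebra

variable {E F : Type*} [AddCommGroup E] [Module ℝ E] [AddCommGroup F] [Module ℝ F]
  {P Q : Set E}

lemma isConvexPolytope_convexHull {s : Set E} (hs : s.Finite) (hne : s.Nonempty) :
    IsConvexPolytope (convexHull ℝ s) :=
  ⟨hs.toFinset, hs.toFinset_nonempty.2 hne, by rw [hs.coe_toFinset]⟩

namespace IsConvexPolytope

lemma convex (hQ : IsConvexPolytope Q) : Convex ℝ Q := by
  obtain ⟨S, -, rfl⟩ := hQ
  exact convex_convexHull ℝ _

lemma nonempty (hQ : IsConvexPolytope Q) : Q.Nonempty := by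
  obtain ⟨S, hS, rfl⟩ := hQ
  exact (Finset.coe_nonempty.2 hS).convexHull

lemma image (hQ : IsConvexPolytope Q) (g : E →ᵃ[ℝ] F) : IsConvexPolytope (g '' Q) := by
  obtain ⟨S, hS, rfl⟩ := hQ
  rw [g.image_convexHull]
  exact isConvexPolytope_convexHull (S.finite_toSet.image g) (Finset.coe_nonempty.2 hS |>.image g)

lemma exists_image_eq (hQ : IsConvexPolytope Q) {g : F →ᵃ[ℝ] E} (hg : Q ⊆ range g) :
    ∃ P, IsConvexPolytope P ∧ g '' P = Q := by
  obtain ⟨S, hS, rfl⟩ := hQ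
  classical
  rw [← image_univ] at hg
  obtain ⟨T, -, rfl⟩ := Finset.subset_set_image_iff.1 ((subset_convexHull ℝ _).trans hg)
  exact ⟨_, ⟨T, Finset.image_nonempty.1 hS, rfl⟩, by rw [g.image_convexHull, Finset.coe_image]⟩

lemma convexHull_insert (hQ : IsConvexPolytope Q) (v : E) :
    IsConvexPolytope (convexHull ℝ (insert v Q)) := by
  obtain ⟨S, -, rfl⟩ := hQ
  rw [insert_eq, convexHull_convexHull_union_right]
  exact isConvexPolytope_convexHull ((finite_singleton v).union S.finite_toSet) ⟨v, .inl rfl⟩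

end IsConvexPolytope

namespace IsPolyhedron

lemma convex (hP : IsPolyhedron P) : Convex ℝ P := by
  obtain ⟨R, rfl⟩ := hP
  simp only [ofPred_forall]
  refine convex_iInter₂ fun r _ => ?_
  simpa only [neg_le_iff_add_nonneg] using convex_halfSpace_ge r.1.isLinear (-r.2)

lemma inter (hP : IsPolyhedron P) (hQ : IsPolyhedron Q) : IsPolyhedron (P ∩ Q) := by
  classical
  obtain ⟨R, rfl⟩ := hP
  obtain ⟨R', rfl⟩ := hQ
  exact ⟨R ∪ R', by ext x; simp only [Finset.mem_union, or_imp, forall_and]; rfl⟩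

end IsPolyhedron

lemma isPolyhedron_le (f : Module.Dual ℝ E) (c : ℝ) : IsPolyhedron {x | f x ≤ c} :=
  ⟨{(-f, c)}, by ext x; simp [add_comm]⟩

lemma isPolyhedron_ge (f : Module.Dual ℝ E) (c : ℝ) : IsPolyhedron {x | c ≤ f x} :=
  ⟨{(f, -c)}, by ext x; simp⟩

/-- The pairing between affine functionals on `E`, written as pairs `(φ, c)`, and the
homogenization `E × ℝ` of `E`. -/
def homogenizedPairing (E : Type*) [AddCommGroup E] [Module ℝ E] :
    Module.Dual ℝ E × ℝ →ₗ[ℝ] E × ℝ →ₗ[ℝ] ℝ :=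
  LinearMap.mk₂ ℝ (fun r x => r.1 x.1 + r.2 * x.2)
    (fun r r' x => by simp only [Prod.fst_add, Prod.snd_add, LinearMap.add_apply]; ring)
    (fun c r x => by
      simp only [Prod.smul_fst, Prod.smul_snd, LinearMap.smul_apply, smul_eq_mul]; ring)
    (fun r x x' => by simp only [Prod.fst_add, Prod.snd_add, map_add]; ring)
    (fun c r x => by simp only [Prod.smul_fst, Prod.smul_snd, map_smul, smul_eq_mul]; ring)

@[simp] lemma homogenizedPairing_apply (r : Module.Dual ℝ E × ℝ) (x : E × ℝ) :
    homogenizedPairing E r x = r.1 x.1 + r.2 * x.2 := rfl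

/-- The cone over the polyhedron `{x | ∀ r ∈ R, 0 ≤ r.1 x + r.2}` placed at height one
in `E × ℝ`. -/
def homogenizedCone (R : Set (Module.Dual ℝ E × ℝ)) : PointedCone ℝ (E × ℝ) :=
  PointedCone.dual (homogenizedPairing E) (insert (0, 1) R)

lemma mem_homogenizedCone {R : Set (Module.Dual ℝ E × ℝ)} {z : E × ℝ} :
    z ∈ homogenizedCone R ↔ 0 ≤ z.2 ∧ ∀ r ∈ R, 0 ≤ r.1 z.1 + r.2 * z.2 := by
  simp [homogenizedCone, PointedCone.mem_dual]

lemma eq_zero_or_inv_smul_mem_of_mem_hull {K : Set E} (hK : Convex ℝ K) {S : Set (E × ℝ)}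
    (hS : ∀ z ∈ S, z = 0 ∨ 0 < z.2 ∧ z.2⁻¹ • z.1 ∈ K) {z : E × ℝ}
    (hz : z ∈ PointedCone.hull ℝ S) : z = 0 ∨ 0 < z.2 ∧ z.2⁻¹ • z.1 ∈ K := by
  induction hz using Submodule.span_induction with
  | mem z hz => exact hS z hz
  | zero => exact .inl rfl
  | add z w _ _ hz hw =>
    rcases hz with rfl | ⟨hz, hzK⟩
    · simpa using hw
    rcases hw with rfl | ⟨hw, hwK⟩
    · simpa using Or.inr ⟨hz, hzK⟩
    refine .inr ⟨add_pos hz hw, ?_⟩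
    have hzw : z.2 + w.2 ≠ 0 := (add_pos hz hw).ne'
    convert hK hzK hwK (a := z.2 / (z.2 + w.2)) (b := w.2 / (z.2 + w.2))
      (by positivity) (by positivity) (by field_simp) using 1
    simp only [Prod.fst_add, Prod.snd_add, smul_smul, smul_add]
    congr 2 <;> field_simp
  | smul r z _ hz =>
    obtain ⟨r, hr⟩ := r
    rcases hr.eq_or_lt with rfl | hr
    · left; ext <;> simp
    rcases hz with rfl | ⟨hz, hzK⟩
    · simp
    · refine .inr ⟨mul_pos hr hz, ?_⟩
      convert hzK using 1
      simp only [Nonneg.mk_smul, Prod.smul_fst, Prod.smul_snd, smul_eq_mul, smul_smul]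
      congr 1
      field_simp

end Algebra

section Normed

variable {E : Type*} [NormedAddCommGroup E] [NormedSpace ℝ E] {P Q : Set E}

lemma IsConvexPolytope.isCompact (hQ : IsConvexPolytope Q) : IsCompact Q := by
  obtain ⟨S, -, rfl⟩ := hQ
  exact S.finite_toSet.isCompact_convexHull ℝ

lemma eq_zero_of_forall_add_smul_mem (hP : Bornology.IsBounded P) {x y : E}
    (h : ∀ t : ℝ, 0 ≤ t → x + t • y ∈ P) : y = 0 := by
  obtain ⟨C, hC⟩ := hP.exists_norm_le
  by_contra hy
  have hnorm : 0 < ‖y‖ := norm_pos_iff.2 hy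
  have hC0 : 0 ≤ C := (norm_nonneg _).trans (hC _ (h 0 le_rfl))
  have far := hC _ (h ((C + ‖x‖ + 1) / ‖y‖) (by positivity))
  have norm_smul_eq : ‖((C + ‖x‖ + 1) / ‖y‖) • y‖ = C + ‖x‖ + 1 := by
    rw [norm_smul, Real.norm_of_nonneg (by positivity), div_mul_cancel₀ _ hnorm.ne']
  linarith [norm_sub_le (x + ((C + ‖x‖ + 1) / ‖y‖) • y) x,
    congrArg norm (add_sub_cancel_left x (((C + ‖x‖ + 1) / ‖y‖) • y))]

lemma eq_zero_or_pos_of_mem_homogenizedCone {R : Set (Module.Dual ℝ E × ℝ)}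
    (hb : Bornology.IsBounded {x | ∀ r ∈ R, 0 ≤ r.1 x + r.2})
    (hne : {x | ∀ r ∈ R, 0 ≤ r.1 x + r.2}.Nonempty) {z : E × ℝ}
    (hz : z ∈ homogenizedCone R) : z = 0 ∨ 0 < z.2 := by
  obtain ⟨x₀, hx₀⟩ := hne
  obtain ⟨hz0, hzR⟩ := mem_homogenizedCone.1 hz
  refine hz0.eq_or_lt.imp_left fun h0 => Prod.ext ?_ h0.symm
  refine eq_zero_of_forall_add_smul_mem hb (x := x₀) fun t ht r hr => ?_
  have := hzR r hr
  rw [← h0, mul_zero, add_zero] at this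
  rw [map_add, map_smul, smul_eq_mul]
  linarith [hx₀ r hr, mul_nonneg ht this]

variable [FiniteDimensional ℝ E]

/-- **Weyl's theorem**: the affine functionals that are nonnegative on a polytope form a finitely
generated cone, and its generators cut out the polytope by Hahn–Banach. -/
theorem IsConvexPolytope.isPolyhedron (hQ : IsConvexPolytope Q) : IsPolyhedron Q := by
  obtain ⟨S, -, rfl⟩ := hQ
  obtain ⟨R, hR⟩ := fg_dual_of_finite (𝕜 := ℝ) (homogenizedPairing E).flip
    (S.finite_toSet.image fun x => (x, (1 : ℝ)))
  have mem_hull_iff (r : Module.Dual ℝ E × ℝ) :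
      r ∈ PointedCone.hull ℝ (R : Set (Module.Dual ℝ E × ℝ)) ↔ ∀ x ∈ S, 0 ≤ r.1 x + r.2 := by
    rw [PointedCone.hull, hR]
    simp [PointedCone.mem_dual]
  have hP : IsPolyhedron {x | ∀ r ∈ R, 0 ≤ r.1 x + r.2} := ⟨R, rfl⟩
  refine ⟨R, (convexHull_min (fun x hx r hr =>
    (mem_hull_iff r).1 (PointedCone.subset_hull hr) x hx) hP.convex).antisymm fun x hx => ?_⟩
  by_contra hxS
  obtain ⟨f, u, hfS, hfx⟩ := geometric_hahn_banach_closed_point (convex_convexHull ℝ _)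
    (S.finite_toSet.isClosed_convexHull ℝ) hxS
  have separating : ((-f : E →L[ℝ] ℝ).toLinearMap, u) ∈ PointedCone.hull ℝ
      (R : Set (Module.Dual ℝ E × ℝ)) :=
    (mem_hull_iff _).2 fun y hy => by
      simpa using (hfS y (subset_convexHull ℝ _ hy)).le
  have mem_dual : (x, (1 : ℝ)) ∈ PointedCone.dual (homogenizedPairing E)
      (PointedCone.hull ℝ (R : Set (Module.Dual ℝ E × ℝ)) : Set (Module.Dual ℝ E × ℝ)) := by
    rw [PointedCone.dual_hull]
    exact fun r hr => by simpa using hx r hr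
  have hfu : 0 ≤ -f x + u := by
    simpa using mem_dual separating
  linarith

/-- **Minkowski's theorem**: the generators of the homogenization of a bounded polyhedron have
positive height, because those of height zero are directions of recession. -/
theorem IsPolyhedron.isConvexPolytope (hP : IsPolyhedron P) (hb : Bornology.IsBounded P)
    (hne : P.Nonempty) : IsConvexPolytope P := by
  have hPc := hP.convex
  obtain ⟨R, rfl⟩ := hP
  obtain ⟨S, hS⟩ := fg_dual_of_finite (𝕜 := ℝ) (homogenizedPairing E)
    (R.finite_toSet.insert (0, 1))
  replace hS : PointedCone.hull ℝ (S : Set (E × ℝ)) = homogenizedCone R := hS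
  have mem_cone {z : E × ℝ} (hz : z ∈ S) : z ∈ homogenizedCone R :=
    hS ▸ PointedCone.subset_hull hz
  have generator {z : E × ℝ} (hz : z ∈ S) : z = 0 ∨ 0 < z.2 :=
    eq_zero_or_pos_of_mem_homogenizedCone hb hne (mem_cone hz)
  set V : Set E := (fun z : E × ℝ => z.2⁻¹ • z.1) '' {z ∈ S | 0 < z.2}
  have hV : V ⊆ {x | ∀ r ∈ R, 0 ≤ r.1 x + r.2} := by
    rintro _ ⟨z, ⟨hzS, hz0⟩, rfl⟩ r hr
    have dehomogenize : r.1 (z.2⁻¹ • z.1) + r.2 = z.2⁻¹ * (r.1 z.1 + r.2 * z.2) := by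
      rw [map_smul, smul_eq_mul]; field_simp
    have := (mem_homogenizedCone.1 (mem_cone hzS)).2 r hr
    rw [dehomogenize]; positivity
  have hP_eq : {x | ∀ r ∈ R, 0 ≤ r.1 x + r.2} = convexHull ℝ V := by
    refine Subset.antisymm (fun x hx => ?_) (convexHull_min hV hPc)
    have hx1 : (x, (1 : ℝ)) ∈ PointedCone.hull ℝ (S : Set (E × ℝ)) :=
      hS ▸ mem_homogenizedCone.2 ⟨zero_le_one, by simpa using hx⟩
    have hgen : ∀ z ∈ (S : Set (E × ℝ)), z = 0 ∨ 0 < z.2 ∧ z.2⁻¹ • z.1 ∈ convexHull ℝ V :=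
      fun z hz => (generator hz).imp_right
        fun h0 => ⟨h0, subset_convexHull ℝ _ ⟨z, ⟨hz, h0⟩, rfl⟩⟩
    simpa using eq_zero_or_inv_smul_mem_of_mem_hull (convex_convexHull ℝ V) hgen hx1
  rw [hP_eq] at hne ⊢
  exact isConvexPolytope_convexHull ((S.finite_toSet.sep _).image _) (convexHull_nonempty_iff.1 hne)

lemma IsConvexPolytope.inter_isPolyhedron (hQ : IsConvexPolytope Q) (hP : IsPolyhedron P)
    (hne : (Q ∩ P).Nonempty) : IsConvexPolytope (Q ∩ P) :=
  (hQ.isPolyhedron.inter hP).isConvexPolytope (hQ.isCompact.isBounded.subset inter_subset_left) hne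

end Normed

end Polytope

section Join

variable {E : Type*} [AddCommGroup E] [Module ℝ E] {A B : Set E} {v x : E}

lemma mem_convexHull_insert_iff (hA : Convex ℝ A) (hne : A.Nonempty) :
    x ∈ convexHull ℝ (insert v A) ↔ ∃ a ∈ A, x ∈ segment ℝ v a := by
  rw [convexHull_insert hne, hA.convexHull_eq, mem_convexJoin]
  simp

lemma convex_setOf_mem_segment (v x : E) : Convex ℝ {c | x ∈ segment ℝ v c} := by
  simp only [segment_eq_image', mem_image]
  rintro a ⟨t, ⟨ht0, ht1⟩, rfl⟩ b ⟨s, ⟨hs0, hs1⟩, hs⟩ α β hα hβ hαβ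
  have hab : s • (b - v) = t • (a - v) := add_left_cancel hs
  rcases ht0.eq_or_lt with rfl | ht
  · exact ⟨0, by simp, by simp⟩
  rcases hs0.eq_or_lt with rfl | hs
  · exact ⟨0, by simp, by simp [← hab]⟩
  have hpos : 0 < α * s + β * t := by
    rcases hα.eq_or_lt with rfl | hα
    · rw [zero_add] at hαβ; simp [hαβ, ht]
    · positivity
  refine ⟨t * s / (α * s + β * t), ⟨by positivity, (div_le_one hpos).2 ?_⟩, ?_⟩
  · nlinarith [mul_nonneg hα (mul_nonneg hs.le (sub_nonneg.2 ht1)),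
      mul_nonneg hβ (mul_nonneg ht.le (sub_nonneg.2 hs1))]
  · obtain rfl : β = 1 - α := by linarith
    have hb : b - v = (t / s) • (a - v) := by
      rw [div_eq_inv_mul, mul_smul, ← hab, inv_smul_smul₀ hs.ne']
    have combination : α • a + (1 - α) • b - v = (α + (1 - α) * (t / s)) • (a - v) := by
      calc α • a + (1 - α) • b - v = α • (a - v) + (1 - α) • (b - v) := by module
        _ = (α + (1 - α) * (t / s)) • (a - v) := by rw [hb]; module
    rw [combination, smul_smul]
    congr 2
    have : s * α + t * (1 - α) ≠ 0 := by linarith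
    field_simp

lemma convexHull_insert_union (hA : Convex ℝ A) (hB : Convex ℝ B) (hAB : Convex ℝ (A ∪ B))
    (hAne : A.Nonempty) (hBne : B.Nonempty) :
    convexHull ℝ (insert v (A ∪ B)) = convexHull ℝ (insert v A) ∪ convexHull ℝ (insert v B) := by
  ext x
  simp only [mem_union, mem_convexHull_insert_iff hA hAne, mem_convexHull_insert_iff hB hBne,
    mem_convexHull_insert_iff hAB hAne.inl, or_and_right, exists_or]

end Join

section JoinInter

variable {E : Type*} [AddCommGroup E] [Module ℝ E] [TopologicalSpace E]
  [IsTopologicalAddGroup E] [ContinuousSMul ℝ E] {A B : Set E} {a b : E}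

lemma exists_mem_segment_inter (hA : IsClosed A) (hB : IsClosed B) (hAB : Convex ℝ (A ∪ B))
    (ha : a ∈ A) (hb : b ∈ B) : (segment ℝ a b ∩ (A ∩ B)).Nonempty :=
  isPreconnected_closed_iff.1 (convex_segment a b).isPreconnected A B hA hB
    (hAB.segment_subset (.inl ha) (.inr hb))
    ⟨a, left_mem_segment ℝ a b, ha⟩ ⟨b, right_mem_segment ℝ a b, hb⟩

lemma convexHull_insert_inter (hA : Convex ℝ A) (hB : Convex ℝ B) (hAB : Convex ℝ (A ∪ B))
    (hAc : IsClosed A) (hBc : IsClosed B) (hne : (A ∩ B).Nonempty) (v : E) :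
    convexHull ℝ (insert v (A ∩ B)) = convexHull ℝ (insert v A) ∩ convexHull ℝ (insert v B) := by
  refine (subset_inter (convexHull_mono (insert_subset_insert inter_subset_left))
    (convexHull_mono (insert_subset_insert inter_subset_right))).antisymm fun x hx => ?_
  obtain ⟨⟨a, ha, hxa⟩, b, hb, hxb⟩ := And.imp (mem_convexHull_insert_iff hA hne.left).1
    (mem_convexHull_insert_iff hB hne.right).1 hx
  obtain ⟨c, hc, hcAB⟩ := exists_mem_segment_inter hAc hBc hAB ha hb
  exact (mem_convexHull_insert_iff (hA.inter hB) hne).2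
    ⟨c, hcAB, (convex_setOf_mem_segment v x).segment_subset hxa hxb hc⟩

end JoinInter

section Valuation

/-- A valuation on the convex polytopes of a real vector space. -/
def IsValuation {E G : Type*} [AddCommGroup E] [Module ℝ E] [Add G] (Z : Set E → G) : Prop :=
  ∀ Q₁ Q₂ : Set E, IsConvexPolytope Q₁ → IsConvexPolytope Q₂ → IsConvexPolytope (Q₁ ∪ Q₂) →
    IsConvexPolytope (Q₁ ∩ Q₂) → Z Q₁ + Z Q₂ = Z (Q₁ ∪ Q₂) + Z (Q₁ ∩ Q₂)

namespace IsValuation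

lemma comp_convexHull_insert {E G : Type*} [NormedAddCommGroup E] [NormedSpace ℝ E] [Add G]
    {Z : Set E → G} (hZ : IsValuation Z) (v : E) :
    IsValuation fun Q => Z (convexHull ℝ (insert v Q)) := by
  intro A B hA hB hU hI
  have hUnion := convexHull_insert_union (v := v) hA.convex hB.convex hU.convex
    hA.nonempty hB.nonempty
  have hInter := convexHull_insert_inter hA.convex hB.convex hU.convex hA.isCompact.isClosed
    hB.isCompact.isClosed hI.nonempty v
  beta_reduce
  rw [hUnion, hInter]
  exact hZ _ _ (hA.convexHull_insert v) (hB.convexHull_insert v)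
    (hUnion ▸ hU.convexHull_insert v) (hInter ▸ hI.convexHull_insert v)

lemma comp_image {E F G : Type*} [AddCommGroup E] [Module ℝ E] [AddCommGroup F] [Module ℝ F]
    [Add G] {Z : Set F → G} (hZ : IsValuation Z) {g : E →ᵃ[ℝ] F} (hg : Function.Injective g) :
    IsValuation fun Q => Z (g '' Q) := by
  intro A B hA hB hU hI
  beta_reduce
  rw [image_union, image_inter hg]
  exact hZ _ _ (hA.image g) (hB.image g) (image_union g A B ▸ hU.image g)
    (image_inter hg ▸ hI.image g)

end IsValuation

end Valuation

lemma exists_forall_le_of_total {ι α : Type*} [Preorder α] (f : ι → α) {s : Set ι}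
    (hs : s.Finite) (hne : s.Nonempty) (htotal : ∀ a ∈ s, ∀ b ∈ s, f a ≤ f b ∨ f b ≤ f a) :
    ∃ u ∈ s, ∀ a ∈ s, f a ≤ f u := by
  obtain ⟨u, hu, hmax⟩ := hs.exists_maximalFor f s hne
  exact ⟨u, hu, fun a ha => (htotal a ha u hu).elim id (hmax ha)⟩

section Dissection

open PointedCone

variable {E G : Type*} [NormedAddCommGroup E] [NormedSpace ℝ E]
  [AddCommGroup G] {Z : Set E → G}

lemma inter_dual_insert (P : Set E) (f : Module.Dual ℝ E) (D : Set (Module.Dual ℝ E)) :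
    P ∩ dual .id (insert f D) = P ∩ dual .id D ∩ {x | 0 ≤ f x} := by
  rw [inter_assoc, inter_comm (dual .id D : Set E)]
  ext x
  simp [PointedCone.mem_dual]

lemma isPolyhedron_dual {D : Set (Module.Dual ℝ E)} (hD : D.Finite) :
    IsPolyhedron (dual .id D : Set E) := by
  classical
  refine ⟨hD.toFinset.image fun f => (f, 0), ?_⟩
  ext x
  simp [PointedCone.mem_dual]

/-- The inequalities `0 ≤ φ x + c` are sorted by the sign of `c`, and the inhomogeneous ones are
normalized to have right-hand side `1`. -/
lemma IsPolyhedron.exists_normalForm {P : Set E} (hP : IsPolyhedron P) :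
    ∃ D U L : Set (Module.Dual ℝ E), D.Finite ∧ U.Finite ∧ L.Finite ∧ 0 ∈ U ∧
      P = {x ∈ (dual .id D : Set E) | (∀ u ∈ U, u x ≤ 1) ∧ ∀ l ∈ L, 1 ≤ l x} := by
  obtain ⟨R, rfl⟩ := hP
  let normalize (r : Module.Dual ℝ E × ℝ) : Module.Dual ℝ E := (-r.2)⁻¹ • r.1
  have normalize_apply (r : Module.Dual ℝ E × ℝ) (x : E) : normalize r x = r.1 x / -r.2 :=
    (div_eq_inv_mul _ _).symm
  refine ⟨Prod.fst '' {r ∈ R | r.2 = 0}, insert 0 (normalize '' {r ∈ R | 0 < r.2}),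
    normalize '' {r ∈ R | r.2 < 0}, (R.finite_toSet.sep _).image _,
    ((R.finite_toSet.sep _).image _).insert _, (R.finite_toSet.sep _).image _,
    mem_insert _ _, ?_⟩
  have upper_iff (x : E) (r : Module.Dual ℝ E × ℝ) (hr : 0 < r.2) :
      normalize r x ≤ 1 ↔ 0 ≤ r.1 x + r.2 := by
    rw [normalize_apply, div_le_one_of_neg (neg_neg_of_pos hr), neg_le_iff_add_nonneg]
  have lower_iff (x : E) (r : Module.Dual ℝ E × ℝ) (hr : r.2 < 0) :
      1 ≤ normalize r x ↔ 0 ≤ r.1 x + r.2 := by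
    rw [normalize_apply, one_le_div (neg_pos.2 hr), neg_le_iff_add_nonneg]
  ext x
  constructor
  · intro hx
    refine ⟨?_, ?_, ?_⟩
    · rintro _ ⟨r, ⟨hr, hr0⟩, rfl⟩
      simpa [hr0] using hx r hr
    · rintro _ (rfl | ⟨r, ⟨hr, hr0⟩, rfl⟩)
      exacts [zero_le_one, (upper_iff x r hr0).2 (hx r hr)]
    · rintro _ ⟨r, ⟨hr, hr0⟩, rfl⟩
      exact (lower_iff x r hr0).2 (hx r hr)
  · rintro ⟨hD, hU, hL⟩ r hr
    rcases lt_trichotomy r.2 0 with h0 | h0 | h0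
    · exact (lower_iff x r h0).1 (hL _ ⟨r, ⟨hr, h0⟩, rfl⟩)
    · simpa [h0] using hD ⟨r, ⟨hr, h0⟩, rfl⟩
    · exact (upper_iff x r h0).1 (hU _ (.inr ⟨r, ⟨hr, h0⟩, rfl⟩))

section Cap

variable {C : PointedCone ℝ E} {u l : Module.Dual ℝ E}

lemma eq_zero_of_isBounded_cap (hb : Bornology.IsBounded (C ∩ {x | u x ≤ 1} : Set E)) {x : E}
    (hx : x ∈ C) (hux : u x ≤ 0) : x = 0 := by
  refine eq_zero_of_forall_add_smul_mem hb (x := 0) fun t ht => ?_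
  rw [zero_add]
  refine ⟨C.smul_mem ht hx, ?_⟩
  rw [mem_ofPred_eq, map_smul, smul_eq_mul]
  linarith [mul_nonpos_of_nonneg_of_nonpos ht hux]

lemma inv_smul_mem_slice {x : E} (hx : x ∈ C) (hux : 0 < u x) :
    (u x)⁻¹ • x ∈ (C ∩ {x | u x = 1} : Set E) :=
  ⟨C.smul_mem (inv_nonneg.2 hux.le) hx, by simp [hux.ne']⟩

lemma cap_eq_singleton (hb : Bornology.IsBounded (C ∩ {x | u x ≤ 1} : Set E))
    (hslice : (C ∩ {x | u x = 1} : Set E) = ∅) : (C ∩ {x | u x ≤ 1} : Set E) = {0} := by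
  refine Subset.antisymm (fun x hx => ?_) (by simp)
  rcases le_or_gt (u x) 0 with hux | hux
  · exact eq_zero_of_isBounded_cap hb hx.1 hux
  · exact (hslice ▸ inv_smul_mem_slice hx.1 hux : _ ∈ (∅ : Set E)).elim

lemma cap_eq_convexHull (hb : Bornology.IsBounded (C ∩ {x | u x ≤ 1} : Set E))
    (hslice : (C ∩ {x | u x = 1} : Set E).Nonempty) :
    (C ∩ {x | u x ≤ 1} : Set E) = convexHull ℝ (insert 0 (C ∩ {x | u x = 1})) := by
  have hconvex : Convex ℝ (C ∩ {x | u x ≤ 1} : Set E) :=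
    C.convex.inter (convex_halfSpace_le u.isLinear 1)
  refine Subset.antisymm (fun x hx => ?_) (convexHull_min ?_ hconvex)
  · rcases le_or_gt (u x) 0 with hux | hux
    · rw [eq_zero_of_isBounded_cap hb hx.1 hux]
      exact subset_convexHull ℝ _ (mem_insert _ _)
    · refine (mem_convexHull_insert_iff (C.convex.inter (convex_hyperplane u.isLinear 1))
        hslice).2 ⟨_, inv_smul_mem_slice hx.1 hux, ?_⟩
      rw [segment_eq_image']
      exact ⟨u x, ⟨hux.le, hx.2⟩, by simp [hux.ne']⟩
  · rintro x (rfl | hx)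
    exacts [⟨C.zero_mem, by simp⟩, ⟨hx.1, hx.2.le⟩]

/-- Moving a point of the cap up to the level `l = 1` along a fixed direction lands in the
frustum. -/
lemma isBounded_cap_of_isBounded_frustum (hu : ∀ x ∈ C, 0 ≤ u x) (hul : ∀ x ∈ C, u x ≤ l x)
    (hb : Bornology.IsBounded (C ∩ {x | u x ≤ 1} ∩ {x | 1 ≤ l x} : Set E))
    (hne : (C ∩ {x | u x ≤ 1} ∩ {x | 1 ≤ l x} : Set E).Nonempty) :
    Bornology.IsBounded (C ∩ {x | u x ≤ 1} : Set E) := by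
  obtain ⟨p, ⟨hpC, -⟩, hp⟩ := hne
  obtain ⟨hqC, hq⟩ := inv_smul_mem_slice hpC (u := l) (zero_lt_one.trans_le hp)
  set q := (l p)⁻¹ • p
  obtain ⟨M, hM⟩ := hb.exists_norm_le
  refine (isBounded_iff_forall_norm_le).2 ⟨M + ‖q‖, fun x hx => ?_⟩
  rcases le_or_gt 1 (l x) with hlx | hlx
  · linarith [hM x ⟨hx, hlx⟩, norm_nonneg q]
  have hlx0 : 0 ≤ l x := (hu x hx.1).trans (hul x hx.1)
  have hyC : x + (1 - l x) • q ∈ C := add_mem hx.1 (C.smul_mem (by linarith) hqC)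
  have hly : l (x + (1 - l x) • q) = 1 := by
    rw [map_add, map_smul, hq, smul_eq_mul]; ring
  calc ‖x‖ = ‖x + (1 - l x) • q - (1 - l x) • q‖ := by rw [add_sub_cancel_right]
    _ ≤ ‖x + (1 - l x) • q‖ + ‖(1 - l x) • q‖ := norm_sub_le _ _
    _ ≤ M + ‖q‖ := by
      gcongr
      · exact hM _ ⟨⟨hyC, (hul _ hyC).trans hly.le⟩, hly.ge⟩
      · rw [norm_smul, Real.norm_of_nonneg (by linarith)]
        exact mul_le_of_le_one_left (norm_nonneg q) (by linarith)

end Cap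

variable [FiniteDimensional ℝ E]

lemma inter_hyperplane_nonempty {P : Set E} (hP : Convex ℝ P) {f : Module.Dual ℝ E} {c : ℝ}
    (hle : (P ∩ {x | f x ≤ c}).Nonempty) (hge : (P ∩ {x | c ≤ f x}).Nonempty) :
    (P ∩ {x | f x = c}).Nonempty := by
  obtain ⟨x, hxP, hx⟩ := hle
  obtain ⟨y, hyP, hy⟩ := hge
  exact hP.isPreconnected.intermediate_value hxP hyP
    f.continuous_of_finiteDimensional.continuousOn ⟨hx, hy⟩

namespace IsValuation

lemma add_inter_halfSpaces (hZ : IsValuation Z) {P : Set E} (hP : IsConvexPolytope P)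
    (f : Module.Dual ℝ E) (c : ℝ) (hle : (P ∩ {x | f x ≤ c}).Nonempty)
    (hge : (P ∩ {x | c ≤ f x}).Nonempty) :
    Z (P ∩ {x | f x ≤ c}) + Z (P ∩ {x | c ≤ f x}) = Z P + Z (P ∩ {x | f x = c}) := by
  have hunion : P ∩ {x | f x ≤ c} ∪ P ∩ {x | c ≤ f x} = P := by
    rw [← inter_union_distrib_left]
    exact inter_eq_left.2 fun x _ => le_total (f x) c
  have hinter : P ∩ {x | f x ≤ c} ∩ (P ∩ {x | c ≤ f x}) = P ∩ {x | f x = c} := by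
    ext x
    simp only [mem_inter_iff, mem_ofPred_eq, le_antisymm_iff]
    tauto
  have hP₁ := hP.inter_isPolyhedron (isPolyhedron_le f c) hle
  have hP₂ := hP.inter_isPolyhedron (isPolyhedron_ge f c) hge
  have hI := hP₁.inter_isPolyhedron hP₂.isPolyhedron
    (hinter.symm ▸ inter_hyperplane_nonempty hP.convex hle hge)
  rw [hZ _ _ hP₁ hP₂ (hunion.symm ▸ hP) hI, hunion, hinter]

lemma eq_zero_of_inter_halfSpaces (hZ : IsValuation Z) {P : Set E} (hP : IsConvexPolytope P)
    (f : Module.Dual ℝ E) (c : ℝ)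
    (hle : (P ∩ {x | f x ≤ c}).Nonempty → Z (P ∩ {x | f x ≤ c}) = 0)
    (hge : (P ∩ {x | c ≤ f x}).Nonempty → Z (P ∩ {x | c ≤ f x}) = 0)
    (heq : (P ∩ {x | f x = c}).Nonempty → Z (P ∩ {x | f x = c}) = 0) : Z P = 0 := by
  rcases (P ∩ {x | f x ≤ c}).eq_empty_or_nonempty with h₁ | h₁
  · have hP_ge : P ∩ {x | c ≤ f x} = P :=
      inter_eq_left.2 fun x hx => (le_total (f x) c).resolve_left fun hxc =>
        h₁.subset ⟨hx, hxc⟩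
    exact hP_ge ▸ hge (hP_ge.symm ▸ hP.nonempty)
  rcases (P ∩ {x | c ≤ f x}).eq_empty_or_nonempty with h₂ | h₂
  · have hP_le : P ∩ {x | f x ≤ c} = P :=
      inter_eq_left.2 fun x hx => (le_total c (f x)).resolve_left fun hxc =>
        h₂.subset ⟨hx, hxc⟩
    exact hP_le ▸ hle h₁
  · have split := hZ.add_inter_halfSpaces hP f c h₁ h₂
    rw [hle h₁, hge h₂, heq (inter_hyperplane_nonempty hP.convex h₁ h₂)] at split
    simpa using split.symm

/-- The sets `P ∩ dual .id D` are the faces of the cells into which the hyperplanes `f = 0`,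
`f ∈ L`, cut `P`. -/
lemma eq_zero_of_cells (hZ : IsValuation Z) {L : Set (Module.Dual ℝ E)} (hL : L.Finite)
    {P : Set E} (hP : IsConvexPolytope P)
    (hcell : ∀ D : Set (Module.Dual ℝ E), D.Finite → (∀ f ∈ L, f ∈ D ∨ -f ∈ D) →
      (P ∩ dual .id D).Nonempty → Z (P ∩ dual .id D) = 0) : Z P = 0 := by
  induction L, hL using Set.Finite.induction_on with
  | empty =>
    simpa using hcell ∅ finite_empty (by simp) (by simpa using hP.nonempty)
  | @insert f L _ _ ih =>
    refine ih fun D hD hDL hne => ?_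
    have insert_neg_f : P ∩ dual .id (insert (-f) D) = P ∩ dual .id D ∩ {x | f x ≤ 0} := by
      simp only [inter_dual_insert, LinearMap.neg_apply, Left.nonneg_neg_iff]
    have insert_both : P ∩ dual .id (insert f (insert (-f) D)) =
        P ∩ dual .id D ∩ {x | f x = 0} := by
      rw [inter_dual_insert, insert_neg_f, inter_assoc]
      simp only [← ofPred_and, ← le_antisymm_iff]
    have mem_or {D' : Set (Module.Dual ℝ E)} (hsub : D ⊆ D') (hf : f ∈ D' ∨ -f ∈ D') :
        ∀ g ∈ insert f L, g ∈ D' ∨ -g ∈ D' := by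
      rintro g (rfl | hg)
      exacts [hf, (hDL g hg).imp (@hsub _) (@hsub _)]
    refine hZ.eq_zero_of_inter_halfSpaces
      (hP.inter_isPolyhedron (isPolyhedron_dual hD) hne) f 0 ?_ ?_ ?_
    · rw [← insert_neg_f]
      exact hcell _ (hD.insert _) (mem_or (subset_insert _ _) (by simp))
    · rw [← inter_dual_insert]
      exact hcell _ (hD.insert _) (mem_or (subset_insert _ _) (by simp))
    · rw [← insert_both]
      exact hcell _ ((hD.insert _).insert _)
        (mem_or ((subset_insert _ _).trans (subset_insert _ _)) (by simp))

end IsValuation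

lemma isConvexPolytope_slice {D : Set (Module.Dual ℝ E)} {u : Module.Dual ℝ E}
    (hD : D.Finite)
    (hb : Bornology.IsBounded (dual .id D ∩ {x | u x ≤ 1} : Set E))
    (hne : (dual .id D ∩ {x | u x = 1} : Set E).Nonempty) :
    IsConvexPolytope (dual .id D ∩ {x | u x = 1} : Set E) := by
  have hslice : (dual .id D ∩ {x | u x = 1} : Set E) =
      (dual .id D ∩ {x | u x ≤ 1} ∩ {x | 1 ≤ u x} : Set E) := by
    ext x; simp [le_antisymm_iff, and_assoc]
  rw [hslice] at hne ⊢
  exact (((isPolyhedron_dual hD).inter (isPolyhedron_le u 1)).inter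
    (isPolyhedron_ge u 1)).isConvexPolytope (hb.subset inter_subset_left) hne

/-- `Z` vanishes on the polytopes lying in hyperplanes that avoid the origin, on the pyramids
with apex `0` over them, and on `{0}` (the pyramid over the empty set). -/
structure VanishesOnPyramids {E G : Type*} [AddCommGroup E] [Module ℝ E] [Zero G]
    (Z : Set E → G) : Prop where
  zero : Z {0} = 0
  base (f : Module.Dual ℝ E) (F : Set E) (hF : IsConvexPolytope F) (hf : ∀ x ∈ F, f x = 1) :
    Z F = 0
  pyramid (f : Module.Dual ℝ E) (F : Set E) (hF : IsConvexPolytope F) (hf : ∀ x ∈ F, f x = 1) :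
    Z (convexHull ℝ (insert 0 F)) = 0

namespace VanishesOnPyramids

variable {D : Set (Module.Dual ℝ E)} {u l : Module.Dual ℝ E}

lemma cap (h : VanishesOnPyramids Z) (hD : D.Finite)
    (hb : Bornology.IsBounded (dual .id D ∩ {x | u x ≤ 1} : Set E)) :
    Z (dual .id D ∩ {x | u x ≤ 1}) = 0 := by
  rcases (dual .id D ∩ {x | u x = 1} : Set E).eq_empty_or_nonempty with hslice | hslice
  · rw [cap_eq_singleton hb hslice, h.zero]
  · rw [cap_eq_convexHull hb hslice]
    exact h.pyramid u _ (isConvexPolytope_slice hD hb hslice) fun x hx => hx.2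

lemma frustum (h : VanishesOnPyramids Z) (hZ : IsValuation Z) (hD : D.Finite)
    (hu : ∀ x ∈ dual .id D, 0 ≤ u x)
    (hul : (∀ x ∈ dual .id D, u x ≤ l x) ∨ ∀ x ∈ dual .id D, l x ≤ u x)
    (hP : IsConvexPolytope (dual .id D ∩ {x | u x ≤ 1} ∩ {x | 1 ≤ l x} : Set E)) :
    Z (dual .id D ∩ {x | u x ≤ 1} ∩ {x | 1 ≤ l x}) = 0 := by
  rcases hul with hul | hlu
  · have hT := isBounded_cap_of_isBounded_frustum hu hul hP.isCompact.isBounded hP.nonempty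
    have hTpoly : IsConvexPolytope (dual .id D ∩ {x | u x ≤ 1} : Set E) :=
      ((isPolyhedron_dual hD).inter (isPolyhedron_le u 1)).isConvexPolytope hT
        ⟨0, zero_mem _, by simp⟩
    have lower : (dual .id D ∩ {x | u x ≤ 1} ∩ {x | l x ≤ 1} : Set E) =
        (dual .id D ∩ {x | l x ≤ 1} : Set E) := by
      ext x
      exact ⟨fun hx => ⟨hx.1.1, hx.2⟩, fun hx => ⟨⟨hx.1, (hul x hx.1).trans hx.2⟩, hx.2⟩⟩
    have middle : (dual .id D ∩ {x | u x ≤ 1} ∩ {x | l x = 1} : Set E) =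
        (dual .id D ∩ {x | l x = 1} : Set E) := by
      ext x
      exact ⟨fun hx => ⟨hx.1.1, hx.2⟩, fun hx => ⟨⟨hx.1, (hul x hx.1).trans hx.2.le⟩, hx.2⟩⟩
    have hslice : (dual .id D ∩ {x | l x = 1} : Set E).Nonempty := by
      obtain ⟨p, ⟨hpD, -⟩, hlp⟩ := hP.nonempty
      exact ⟨_, inv_smul_mem_slice hpD (zero_lt_one.trans_le hlp)⟩
    have hB : Bornology.IsBounded (dual .id D ∩ {x | l x ≤ 1} : Set E) :=
      hT.subset fun x hx => ⟨hx.1, (hul x hx.1).trans hx.2⟩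
    have split := hZ.add_inter_halfSpaces hTpoly l 1 (lower ▸ ⟨0, zero_mem _, by simp⟩) hP.nonempty
    rw [lower, middle, h.cap hD hT, h.cap hD hB,
      h.base l _ (isConvexPolytope_slice hD hB hslice) fun x hx => hx.2] at split
    simpa using split
  · exact h.base u _ hP fun x hx => hx.1.2.antisymm (hx.2.trans (hlu x hx.1.1))

lemma cell (h : VanishesOnPyramids Z) (hZ : IsValuation Z) {U L : Set (Module.Dual ℝ E)}
    (hD : D.Finite) (hU : U.Finite) (hL : L.Finite) (hU0 : 0 ∈ U)
    (htotal : ∀ a ∈ U ∪ L, ∀ b ∈ U ∪ L,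
      (∀ x ∈ dual .id D, a x ≤ b x) ∨ ∀ x ∈ dual .id D, b x ≤ a x)
    (hP : IsConvexPolytope {x ∈ (dual .id D : Set E) | (∀ u ∈ U, u x ≤ 1) ∧ ∀ l ∈ L, 1 ≤ l x}) :
    Z {x ∈ (dual .id D : Set E) | (∀ u ∈ U, u x ≤ 1) ∧ ∀ l ∈ L, 1 ≤ l x} = 0 := by
  let onCone (a : Module.Dual ℝ E) : dual .id D → ℝ := fun x => a x
  have hcomparable : ∀ a ∈ U ∪ L, ∀ b ∈ U ∪ L, onCone a ≤ onCone b ∨ onCone b ≤ onCone a := by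
    simpa only [onCone, Pi.le_def, Subtype.forall] using htotal
  obtain ⟨u, huU, hu⟩ := exists_forall_le_of_total onCone hU ⟨0, hU0⟩ fun a ha b hb =>
    hcomparable a (.inl ha) b (.inl hb)
  have hu0 : ∀ x ∈ dual .id D, 0 ≤ u x := fun x hx => hu 0 hU0 ⟨x, hx⟩
  have upper_iff {x : E} (hx : x ∈ dual .id D) : (∀ a ∈ U, a x ≤ 1) ↔ u x ≤ 1 :=
    ⟨fun h => h u huU, fun h a ha => (hu a ha ⟨x, hx⟩).trans h⟩
  rcases L.eq_empty_or_nonempty with rfl | hLne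
  · have hcap : {x ∈ (dual .id D : Set E) | (∀ u ∈ U, u x ≤ 1) ∧
        ∀ l ∈ (∅ : Set (Module.Dual ℝ E)), 1 ≤ l x} = (dual .id D ∩ {x | u x ≤ 1} : Set E) := by
      ext x
      exact and_congr_right fun hx => (and_iff_left (by simp)).trans (upper_iff hx)
    rw [hcap] at hP ⊢
    exact h.cap hD hP.isCompact.isBounded
  · obtain ⟨l, hlL, hl⟩ := exists_forall_le_of_total (OrderDual.toDual ∘ onCone) hL hLne
      fun a ha b hb => (hcomparable a (.inr ha) b (.inr hb)).symm
    have lower_iff {x : E} (hx : x ∈ dual .id D) : (∀ a ∈ L, 1 ≤ a x) ↔ 1 ≤ l x :=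
      ⟨fun h => h l hlL, fun h a ha => h.trans (hl a ha ⟨x, hx⟩)⟩
    have hfrustum : {x ∈ (dual .id D : Set E) | (∀ u ∈ U, u x ≤ 1) ∧ ∀ l ∈ L, 1 ≤ l x} =
        (dual .id D ∩ {x | u x ≤ 1} ∩ {x | 1 ≤ l x} : Set E) := by
      rw [inter_assoc]
      ext x
      exact and_congr_right fun hx => and_congr (upper_iff hx) (lower_iff hx)
    rw [hfrustum] at hP ⊢
    exact h.frustum hZ hD hu0 (htotal u (.inl huU) l (.inr hlL)) hP

end VanishesOnPyramids

theorem VanishesOnPyramids.eq_zero (h : VanishesOnPyramids Z) (hZ : IsValuation Z) {P : Set E}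
    (hP : IsConvexPolytope P) : Z P = 0 := by
  obtain ⟨D, U, L, hD, hU, hL, hU0, hP_eq⟩ := hP.isPolyhedron.exists_normalForm
  refine hZ.eq_zero_of_cells ((hU.union hL).image2 (· - ·) (hU.union hL)) hP
    fun D' hD' hsign hne => ?_
  have hcell : P ∩ dual .id D' =
      {x ∈ (dual .id (D ∪ D') : Set E) | (∀ u ∈ U, u x ≤ 1) ∧ ∀ l ∈ L, 1 ≤ l x} := by
    rw [hP_eq, dual_union]
    ext x
    simp only [mem_inter_iff, mem_ofPred_eq, SetLike.mem_coe, Submodule.mem_inf]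
    tauto
  have hpoly := hP.inter_isPolyhedron (isPolyhedron_dual hD') hne
  rw [hcell] at hpoly ⊢
  refine h.cell hZ (hD.union hD') hU hL hU0 (fun a ha b hb => ?_) hpoly
  refine (hsign (a - b) (mem_image2_of_mem ha hb)).symm.imp (fun hab x hx => ?_) fun hab x hx => ?_
  · simpa using hx (.inr hab)
  · simpa using hx (.inr hab)

end Dissection

section SimplexInduction

/-- `Z` vanishes on every simplex whose vertices, except possibly one at the origin, are linearly
independent. -/
structure VanishesOnSimplices {E G : Type*} [AddCommGroup E] [Module ℝ E] [Zero G]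
    (Z : Set E → G) : Prop where
  face {k : ℕ} (t : Fin (k + 1) → E) (ht : LinearIndependent ℝ t) : Z (convexHull ℝ (range t)) = 0
  corner {k : ℕ} (t : Fin k → E) (ht : LinearIndependent ℝ t) :
    Z (convexHull ℝ (insert 0 (range t))) = 0

lemma linearIndependent_cons_add {K E : Type*} [Field K] [AddCommGroup E] [Module K E]
    {f : Module.Dual K E} {v : E} (hv : f v ≠ 0) {k : ℕ} {t : Fin k → LinearMap.ker f}
    (ht : LinearIndependent K t) :
    LinearIndependent K (Fin.cons v fun i => (t i : E) + v : Fin (k + 1) → E) := by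
  rw [Fintype.linearIndependent_iff] at ht ⊢
  intro c hc
  simp only [Fin.sum_univ_succ, Fin.cons_zero, Fin.cons_succ, smul_add, Finset.sum_add_distrib,
    ← Finset.sum_smul] at hc
  have hsum : c 0 + ∑ i : Fin k, c i.succ = 0 := by
    have := congrArg f hc
    simpa [← add_mul, hv] using this
  have htail : ∑ i : Fin k, c i.succ • t i = 0 := by
    apply Subtype.ext
    push_cast
    have hcoeff := congrArg (· • v) hsum
    simp only [add_smul, zero_smul] at hcoeff
    rw [add_left_comm, hcoeff, add_zero] at hc
    exact hc
  have hzero := ht _ htail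
  exact Fin.cases (by simpa [hzero] using hsum) hzero

lemma convexHull_insert_convexHull {E : Type*} [AddCommGroup E] [Module ℝ E] (v : E) (s : Set E) :
    convexHull ℝ (insert v (convexHull ℝ s)) = convexHull ℝ (insert v s) := by
  rw [insert_eq, convexHull_convexHull_union_right, ← insert_eq]

/-- Translation by `v` embeds the kernel of a linear form as the parallel hyperplane through `v`. -/
def kerTranslate {E : Type*} [AddCommGroup E] [Module ℝ E] (f : Module.Dual ℝ E) (v : E) :
    LinearMap.ker f →ᵃ[ℝ] E :=
  (LinearMap.ker f).subtype.toAffineMap + AffineMap.const ℝ _ v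

section KerTranslate

variable {E : Type*} [AddCommGroup E] [Module ℝ E] {f : Module.Dual ℝ E} {v : E}

lemma kerTranslate_apply (x : LinearMap.ker f) : kerTranslate f v x = x + v := rfl

lemma kerTranslate_injective : Function.Injective (kerTranslate f v) := fun _ _ h =>
  Subtype.ext (add_right_cancel h)

lemma mem_range_kerTranslate {x : E} (hx : f x = f v) : x ∈ range (kerTranslate f v) :=
  ⟨⟨x - v, by simp [hx]⟩, sub_add_cancel x v⟩

end KerTranslate

namespace VanishesOnSimplices

section Slice

variable {E G : Type*} [AddCommGroup E] [Module ℝ E] [Zero G] {Z : Set E → G}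
  {f : Module.Dual ℝ E} {v : E}

lemma comp_kerTranslate (h : VanishesOnSimplices Z) (hv : f v ≠ 0) :
    VanishesOnSimplices fun Q => Z (kerTranslate f v '' Q) where
  face t ht := by
    have hli := (linearIndependent_cons_add hv ht).comp Fin.succ (Fin.succ_injective _)
    rw [AffineMap.image_convexHull, ← range_comp]
    exact h.face _ hli
  corner t ht := by
    rw [AffineMap.image_convexHull, image_insert_eq, ← range_comp, kerTranslate_apply,
      Submodule.coe_zero, zero_add, ← Fin.range_cons]
    exact h.face _ (linearIndependent_cons_add hv ht)

lemma comp_convexHull_insert_kerTranslate (h : VanishesOnSimplices Z) (hv : f v ≠ 0) :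
    VanishesOnSimplices fun Q => Z (convexHull ℝ (insert 0 (kerTranslate f v '' Q))) where
  face t ht := by
    have hli := (linearIndependent_cons_add hv ht).comp Fin.succ (Fin.succ_injective _)
    rw [AffineMap.image_convexHull, convexHull_insert_convexHull, ← range_comp]
    exact h.corner _ hli
  corner t ht := by
    rw [AffineMap.image_convexHull, convexHull_insert_convexHull, image_insert_eq, ← range_comp,
      kerTranslate_apply, Submodule.coe_zero, zero_add, ← Fin.range_cons]
    exact h.corner _ (linearIndependent_cons_add hv ht)

end Slice

theorem eq_zero {E G : Type*} [NormedAddCommGroup E] [NormedSpace ℝ E] [FiniteDimensional ℝ E]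
    [AddCommGroup G] {Z : Set E → G} (h : VanishesOnSimplices Z) (hZ : IsValuation Z) {P : Set E}
    (hP : IsConvexPolytope P) : Z P = 0 := by
  refine VanishesOnPyramids.eq_zero ⟨?_, fun f F hF hf => ?_, fun f F hF hf => ?_⟩ hZ hP
  · simpa using h.corner (k := 0) ![] linearIndependent_empty_type
  all_goals
    obtain ⟨v, hvF⟩ := hF.nonempty
    have hv : f v ≠ 0 := hf v hvF ▸ one_ne_zero
    have : Module.finrank ℝ (LinearMap.ker f) < Module.finrank ℝ E :=
      Submodule.finrank_lt fun htop => hv (LinearMap.mem_ker.1 (htop ▸ Submodule.mem_top))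
    obtain ⟨F', hF', rfl⟩ := hF.exists_image_eq (g := kerTranslate f v) fun x hx =>
      mem_range_kerTranslate ((hf x hx).trans (hf v hvF).symm)
  · exact (h.comp_kerTranslate hv).eq_zero (hZ.comp_image kerTranslate_injective) hF'
  · exact (h.comp_convexHull_insert_kerTranslate hv).eq_zero
      ((hZ.comp_convexHull_insert 0).comp_image kerTranslate_injective) hF'
termination_by Module.finrank ℝ E

end VanishesOnSimplices

end SimplexInduction

section MatVec

variable {n : ℕ} (A B : Matrix (Fin n) (Fin n) ℝ) (S : Set (En n))

lemma matVec_mul (x : En n) : matVec (A * B) x = matVec A (matVec B x) := by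
  simp [matVec, Matrix.toLpLin_apply, Matrix.mulVec_mulVec]

lemma matVec_one (x : En n) : matVec 1 x = x := by
  simp [matVec]

lemma matVec_mul_image : matVec (A * B) '' S = matVec A '' (matVec B '' S) := by
  rw [image_image, image_congr fun x _ => matVec_mul A B x]

lemma matVec_one_image : matVec 1 '' S = S := by
  rw [image_congr fun x _ => matVec_one x, image_id']

lemma matVec_injective {A : Matrix (Fin n) (Fin n) ℝ} (hA : A.det ≠ 0) :
    Function.Injective (matVec A) :=
  Function.LeftInverse.injective (g := matVec A⁻¹) fun x => by
    rw [← matVec_mul, Matrix.nonsing_inv_mul _ (isUnit_iff_ne_zero.2 hA), matVec_one]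

lemma IsConvexPolytope.matVec_image {S : Set (En n)} (hS : IsConvexPolytope S) :
    IsConvexPolytope (matVec A '' S) :=
  hS.image (Matrix.toEuclideanLin A).toAffineMap

lemma matVec_image_convexHull : matVec A '' convexHull ℝ S = convexHull ℝ (matVec A '' S) :=
  LinearMap.image_convexHull (Matrix.toEuclideanLin A) S

end MatVec

section Shear

variable {n : ℕ} {a b : Fin n}

/-- The matrix sending the basis vector `e_a` to `p e_a + q e_b` and fixing the others. -/
def shear (a b : Fin n) (p q : ℝ) : Matrix (Fin n) (Fin n) ℝ :=
  1 + Matrix.vecMulVec ((p - 1) • Pi.single a 1 + q • Pi.single b 1) (Pi.single a 1)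

lemma det_shear (hab : a ≠ b) (p q : ℝ) : (shear a b p q).det = p := by
  rw [shear, Matrix.vecMulVec_eq Unit, Matrix.det_one_add_replicateCol_mul_replicateRow]
  simp [hab]

lemma matVec_shear (a b : Fin n) (p q : ℝ) (w : En n) :
    matVec (shear a b p q) w =
      w + w a • ((p - 1) • EuclideanSpace.single a 1 + q • EuclideanSpace.single b 1) := by
  ext i
  simp [matVec, Matrix.toLpLin_apply, shear, Matrix.vecMulVec_mulVec]

lemma matVec_shear_of_eq_zero (p q : ℝ) {w : En n} (h : w a = 0) :
    matVec (shear a b p q) w = w := by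
  rw [matVec_shear, h, zero_smul, add_zero]

lemma matVec_shear_apply_left (hab : a ≠ b) (p q : ℝ) (w : En n) :
    matVec (shear a b p q) w a = p * w a := by
  simp [matVec_shear, hab, mul_sub, mul_comm p (w a)]

lemma matVec_shear_apply_right (hab : a ≠ b) (p q : ℝ) (w : En n) :
    matVec (shear a b p q) w b = w b + q * w a := by
  simp [matVec_shear, hab.symm, mul_comm]

lemma matVec_shear_apply_of_ne {c : Fin n} (hca : c ≠ a) (hcb : c ≠ b) (p q : ℝ) (w : En n) :
    matVec (shear a b p q) w c = w c := by
  simp [matVec_shear, hca, hcb]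

lemma sum_matVec_shear (a b : Fin n) (p : ℝ) (w : En n) :
    ∑ i, matVec (shear a b p (1 - p)) w i = ∑ i, w i := by
  simp [matVec_shear, Finset.sum_add_distrib, mul_sub]

lemma matVec_shear_shear_inv (hab : a ≠ b) {p : ℝ} (hp : p ≠ 0) (w : En n) :
    matVec (shear a b p (1 - p)) (matVec (shear a b p⁻¹ (1 - p⁻¹)) w) = w := by
  ext i
  rcases eq_or_ne i a with rfl | ha
  · rw [matVec_shear_apply_left hab, matVec_shear_apply_left hab, mul_inv_cancel_left₀ hp]
  rcases eq_or_ne i b with rfl | hb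
  · rw [matVec_shear_apply_right hab, matVec_shear_apply_right hab, matVec_shear_apply_left hab]
    field_simp
    ring
  · rw [matVec_shear_apply_of_ne ha hb, matVec_shear_apply_of_ne ha hb]

end Shear

section CoordSimplex

variable {n : ℕ} {s : Set ℝ} {I : Finset (Fin n)} {a b : Fin n}

/-- The vectors with nonnegative coordinates, supported on `I`, whose coordinate sum lies in `s`:
the simplex spanned by the basis vectors `e_i`, `i ∈ I`, when `s = {1}`, and the simplex spanned by
these vectors and the origin when `s = Icc 0 1`. -/
def coordSimplex (s : Set ℝ) (I : Finset (Fin n)) : Set (En n) :=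
  {w | (∀ i, 0 ≤ w i) ∧ (∀ i ∉ I, w i = 0) ∧ ∑ i, w i ∈ s}

lemma coordSimplex_erase :
    coordSimplex s (I.erase b) = {w ∈ coordSimplex s I | w b = 0} := by
  ext w
  refine ⟨fun ⟨h0, hI, hs⟩ => ⟨⟨h0, fun i hi => hI i (mt Finset.mem_of_mem_erase hi), hs⟩,
    hI b (Finset.notMem_erase b I)⟩, fun ⟨⟨h0, hI, hs⟩, hb⟩ => ⟨h0, fun i hi => ?_, hs⟩⟩
  rcases eq_or_ne i b with rfl | hib
  exacts [hb, hI i fun hiI => hi (Finset.mem_erase.2 ⟨hib, hiI⟩)]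

lemma matVec_shear_mem_coordSimplex (hab : a ≠ b) (ha : a ∈ I) (hb : b ∈ I) {p : ℝ} (hp : 0 ≤ p)
    {w : En n} (hw : w ∈ coordSimplex s I) (hwb : 0 ≤ w b + (1 - p) * w a) :
    matVec (shear a b p (1 - p)) w ∈ coordSimplex s I := by
  refine ⟨fun i => ?_, fun i hi => ?_, by rw [sum_matVec_shear]; exact hw.2.2⟩
  · rcases eq_or_ne i a with rfl | hia
    · exact matVec_shear_apply_left hab _ _ w ▸ mul_nonneg hp (hw.1 i)
    rcases eq_or_ne i b with rfl | hib
    · exact matVec_shear_apply_right hab _ _ w ▸ hwb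
    · exact matVec_shear_apply_of_ne hia hib _ _ w ▸ hw.1 i
  · rw [matVec_shear_apply_of_ne (ne_of_mem_of_not_mem ha hi).symm
      (ne_of_mem_of_not_mem hb hi).symm, hw.2.1 i hi]

lemma shear_image_coordSimplex (hab : a ≠ b) (ha : a ∈ I) (hb : b ∈ I) {p : ℝ} (hp : 0 < p)
    (hp1 : p < 1) : matVec (shear a b p (1 - p)) '' coordSimplex s I =
      coordSimplex s I ∩ {w | (1 - p) * w a ≤ p * w b} := by
  ext w
  constructor
  · rintro ⟨v, hv, rfl⟩
    refine ⟨matVec_shear_mem_coordSimplex hab ha hb hp.le hv ?_, ?_⟩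
    · exact add_nonneg (hv.1 b) (mul_nonneg (sub_nonneg.2 hp1.le) (hv.1 a))
    · simp only [mem_ofPred_eq, matVec_shear_apply_left hab, matVec_shear_apply_right hab]
      linarith [mul_nonneg hp.le (hv.1 b)]
  · rintro ⟨hw, hle : (1 - p) * w a ≤ p * w b⟩
    refine ⟨_, matVec_shear_mem_coordSimplex hab ha hb (inv_nonneg.2 hp.le) hw ?_,
      matVec_shear_shear_inv hab hp.ne' w⟩
    have : w b + (1 - p⁻¹) * w a = p⁻¹ * (p * w b - (1 - p) * w a) := by field_simp; ring
    exact this ▸ mul_nonneg (inv_nonneg.2 hp.le) (sub_nonneg.2 hle)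

lemma shear_image_coordSimplex_erase (hab : a ≠ b) (ha : a ∈ I) (hb : b ∈ I) {p : ℝ} (hp : 0 < p)
    (hp1 : p < 1) : matVec (shear a b p (1 - p)) '' coordSimplex s (I.erase b) =
      coordSimplex s I ∩ {w | (1 - p) * w a = p * w b} := by
  have hface : coordSimplex s (I.erase b) = coordSimplex s I ∩
      matVec (shear a b p (1 - p)) ⁻¹' {w | (1 - p) * w a = p * w b} := by
    rw [coordSimplex_erase]
    ext w
    refine and_congr_right fun _ => ?_
    simp only [mem_preimage, mem_ofPred_eq, matVec_shear_apply_left hab,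
      matVec_shear_apply_right hab]
    rw [mul_left_comm, mul_right_inj' hp.ne', right_eq_add]
  rw [hface, image_inter_preimage, shear_image_coordSimplex hab ha hb hp hp1, inter_assoc]
  congr 1
  exact inter_eq_right.2 fun w hw => le_of_eq hw

lemma shear_image_coordSimplex_of_notMem (ha : a ∉ I) (p q : ℝ) :
    matVec (shear a b p q) '' coordSimplex s I = coordSimplex s I := by
  rw [image_congr fun w hw => matVec_shear_of_eq_zero p q (hw.2.1 a ha), image_id']

lemma matVec_swap_apply (a b : Fin n) (w : En n) (i : Fin n) :
    matVec (Matrix.swap ℝ a b) w i = w (Equiv.swap a b i) := by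
  simp [matVec, Matrix.toLpLin_apply, Matrix.swap_mulVec]

lemma swap_image_coordSimplex (ha : a ∈ I) (hb : b ∈ I) :
    matVec (Matrix.swap ℝ a b) '' coordSimplex s I = coordSimplex s I := by
  have hmem {w : En n} (hw : w ∈ coordSimplex s I) :
      matVec (Matrix.swap ℝ a b) w ∈ coordSimplex s I := by
    refine ⟨fun i => matVec_swap_apply a b w i ▸ hw.1 _, fun i hi => ?_, ?_⟩
    · rw [matVec_swap_apply, Equiv.swap_apply_of_ne_of_ne (ne_of_mem_of_not_mem ha hi).symm
        (ne_of_mem_of_not_mem hb hi).symm, hw.2.1 i hi]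
    · simp_rw [matVec_swap_apply, Equiv.sum_comp (Equiv.swap a b) fun i => w i]
      exact hw.2.2
  refine Subset.antisymm (image_subset_iff.2 fun w hw => hmem hw) fun w hw => ⟨_, hmem hw, ?_⟩
  ext i
  rw [matVec_swap_apply, matVec_swap_apply, Equiv.swap_apply_self]

end CoordSimplex

section SLCovariance

variable {n : ℕ} {Y : Set (En n) → En n} {s : Set ℝ} {I : Finset (Fin n)}

section NormalizedValue

variable [Nonempty (Fin n)]

/-- A diagonal matrix of determinant `D`. -/
def detMatrix (n : ℕ) [Nonempty (Fin n)] (D : ℝ) : Matrix (Fin n) (Fin n) ℝ :=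
  Matrix.diagonal (Pi.mulSingle (Classical.arbitrary (Fin n)) D)

lemma det_detMatrix (D : ℝ) : (detMatrix n D).det = D := by
  rw [detMatrix, Matrix.det_diagonal, Fintype.prod_pi_mulSingle']

lemma detMatrix_one : detMatrix n 1 = 1 := by
  rw [detMatrix, Pi.mulSingle_one, Pi.one_def, Matrix.diagonal_one]

/-- The value `M⁻¹ Y(M S)` for a matrix `M` of determinant `D`. When `Y` is `SL(n)` covariant it
does not depend on the choice of `M`, so that all values of `Y` on the linear images of `S` are
encoded in a function of the determinant. -/
def normalizedValue (Y : Set (En n) → En n) (D : ℝ) (S : Set (En n)) : En n :=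
  matVec (detMatrix n D)⁻¹ (Y (matVec (detMatrix n D) '' S))

lemma normalizedValue_one (S : Set (En n)) : normalizedValue Y 1 S = Y S := by
  rw [normalizedValue, detMatrix_one, inv_one, matVec_one, matVec_one_image]

lemma normalizedValue_matVec_image (hY : IsPolySLCovariant Y) {D : ℝ} (hD : D ≠ 0)
    {A : Matrix (Fin n) (Fin n) ℝ} (hA : A.det ≠ 0) {S : Set (En n)} (hS : IsConvexPolytope S) :
    normalizedValue Y D (matVec A '' S) = matVec A (normalizedValue Y (D * A.det) S) := by
  set M := detMatrix n D with hM
  set M' := detMatrix n (D * A.det) with hM'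
  have hM_unit : IsUnit M.det := by rw [hM, det_detMatrix]; exact hD.isUnit
  have hM'_unit : IsUnit M'.det := by rw [hM', det_detMatrix]; exact (mul_ne_zero hD hA).isUnit
  have hfactor : M * A * M'⁻¹ * M' = M * A := Matrix.nonsing_inv_mul_cancel_right _ _ hM'_unit
  have hdet : (M * A * M'⁻¹).det = 1 := by
    rw [Matrix.det_mul, Matrix.det_mul, Matrix.det_nonsing_inv, hM, hM', det_detMatrix,
      det_detMatrix, Ring.mul_inverse_cancel _ (mul_ne_zero hD hA).isUnit]
  have hcov := hY _ (hS.matVec_image M') _ hdet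
  rw [← matVec_mul_image, hfactor, matVec_mul_image] at hcov
  rw [normalizedValue, normalizedValue, ← hM, ← hM', hcov, ← matVec_mul, ← matVec_mul,
    Matrix.mul_assoc M, Matrix.nonsing_inv_mul_cancel_left _ _ hM_unit]

lemma normalizedValue_of_matVec_image_eq (hY : IsPolySLCovariant Y) {D : ℝ} (hD : D ≠ 0)
    {A : Matrix (Fin n) (Fin n) ℝ} (hA : A.det ≠ 0) {S : Set (En n)} (hS : IsConvexPolytope S)
    (hAS : matVec A '' S = S) :
    normalizedValue Y D S = matVec A (normalizedValue Y (D * A.det) S) := by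
  rw [← normalizedValue_matVec_image hY hD hA hS, hAS]

lemma IsValuation.normalizedValue (hV : IsValuation Y) {D : ℝ} (hD : D ≠ 0) :
    IsValuation (normalizedValue Y D) := by
  intro P Q hP hQ hU hI
  have himage := hV.comp_image (g := (Matrix.toEuclideanLin (detMatrix n D)).toAffineMap)
    (matVec_injective ((det_detMatrix D).trans_ne hD)) P Q hP hQ hU hI
  have := congrArg (Matrix.toEuclideanLin (detMatrix n D)⁻¹) himage
  rwa [map_add, map_add] at this

end NormalizedValue

variable [Nontrivial (Fin n)]

section Stabilizer

lemma normalizedValue_apply_of_notMem (hY : IsPolySLCovariant Y) {D : ℝ} (hD : D ≠ 0)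
    (hS : IsConvexPolytope (coordSimplex s I)) {j : Fin n} (hj : j ∉ I) :
    normalizedValue Y D (coordSimplex s I) j = 0 := by
  obtain ⟨i, hij⟩ := exists_ne j
  have hdet := det_shear hij.symm 1 1
  have hfix := normalizedValue_of_matVec_image_eq hY hD (hdet.trans_ne one_ne_zero) hS
    (shear_image_coordSimplex_of_notMem hj 1 1)
  rw [hdet, mul_one] at hfix
  have hi := congrArg (fun v : En n => v i) hfix
  simpa only [matVec_shear_apply_right hij.symm, one_mul, left_eq_add] using hi

lemma normalizedValue_eq_of_notMem (hY : IsPolySLCovariant Y) {D D' : ℝ} (hD : D ≠ 0)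
    (hD' : D' ≠ 0) (hS : IsConvexPolytope (coordSimplex s I)) {j : Fin n} (hj : j ∉ I) :
    normalizedValue Y D (coordSimplex s I) = normalizedValue Y D' (coordSimplex s I) := by
  obtain ⟨i, hij⟩ := exists_ne j
  have hdet := det_shear hij.symm (D' / D) 0
  have hfix := normalizedValue_of_matVec_image_eq hY hD (hdet.trans_ne (div_ne_zero hD' hD)) hS
    (shear_image_coordSimplex_of_notMem hj _ 0)
  rwa [hdet, mul_div_cancel₀ _ hD,
    matVec_shear_of_eq_zero _ _ (normalizedValue_apply_of_notMem hY hD' hS hj)] at hfix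

lemma normalizedValue_apply_swap (hY : IsPolySLCovariant Y) {D : ℝ} (hD : D ≠ 0)
    (hS : IsConvexPolytope (coordSimplex s I)) {a b : Fin n} (hab : a ≠ b) (ha : a ∈ I)
    (hb : b ∈ I) (i : Fin n) : normalizedValue Y D (coordSimplex s I) i =
      normalizedValue Y (-D) (coordSimplex s I) (Equiv.swap a b i) := by
  have hdet : (Matrix.swap ℝ a b).det = -1 := by
    rw [Matrix.swap, Matrix.det_permutation, Equiv.Perm.sign_swap hab]
    simp
  have hfix := normalizedValue_of_matVec_image_eq hY hD (hdet.trans_ne (by norm_num)) hS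
    (swap_image_coordSimplex ha hb)
  rw [hdet, mul_neg_one] at hfix
  rw [hfix, matVec_swap_apply]

lemma normalizedValue_apply_eq (hn : 2 < n) (hY : IsPolySLCovariant Y) {D : ℝ} (hD : D ≠ 0)
    (hS : IsConvexPolytope (coordSimplex s I)) {a b : Fin n} (ha : a ∈ I) (hb : b ∈ I) :
    normalizedValue Y D (coordSimplex s I) a = normalizedValue Y D (coordSimplex s I) b := by
  rcases eq_or_ne a b with rfl | hab
  · rfl
  by_cases hI : ∃ j, j ∉ I
  · obtain ⟨j, hj⟩ := hI
    rw [normalizedValue_apply_swap hY hD hS hab ha hb a, Equiv.swap_apply_left,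
      normalizedValue_eq_of_notMem hY hD (neg_ne_zero.2 hD) hS hj]
  · push Not at hI
    obtain ⟨c, hca, hcb⟩ := Fin.exists_ne_and_ne_of_two_lt a b hn
    rw [normalizedValue_apply_swap hY hD hS hca.symm ha (hI c) a, Equiv.swap_apply_left,
      normalizedValue_apply_swap hY hD hS hcb.symm hb (hI c) b, Equiv.swap_apply_left]

lemma normalizedValue_neg_univ (hn : 2 < n) (hY : IsPolySLCovariant Y) {D : ℝ} (hD : D ≠ 0)
    (hS : IsConvexPolytope (coordSimplex s (Finset.univ : Finset (Fin n)))) :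
    normalizedValue Y (-D) (coordSimplex s .univ) = normalizedValue Y D (coordSimplex s .univ) := by
  ext c
  obtain ⟨a, hac⟩ := exists_ne c
  obtain ⟨b, hba, hbc⟩ := Fin.exists_ne_and_ne_of_two_lt a c hn
  rw [normalizedValue_apply_swap hY hD hS hba.symm (Finset.mem_univ a) (Finset.mem_univ b) c,
    Equiv.swap_apply_of_ne_of_ne hac.symm hbc.symm]

end Stabilizer

section Splitting

lemma normalizedValue_split (hY : IsPolySLCovariant Y) (hV : IsValuation Y) {D : ℝ} (hD : D ≠ 0)
    {a b : Fin n} (hab : a ≠ b) (ha : a ∈ I) (hb : b ∈ I) (hS : IsConvexPolytope (coordSimplex s I))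
    (hF : IsConvexPolytope (coordSimplex s (I.erase a))) {p q : ℝ} (hp : 0 < p) (hq : 0 < q)
    (hpq : p + q = 1) :
    matVec (shear a b p q) (normalizedValue Y (D * p) (coordSimplex s I)) +
        matVec (shear b a q p) (normalizedValue Y (D * q) (coordSimplex s I)) =
      normalizedValue Y D (coordSimplex s I) +
        matVec (shear b a q p) (normalizedValue Y (D * q) (coordSimplex s (I.erase a))) := by
  obtain rfl : q = 1 - p := eq_sub_of_add_eq' hpq
  have hleft := shear_image_coordSimplex (s := s) hab ha hb hp (sub_pos.1 hq)
  have hright := shear_image_coordSimplex (s := s) hab.symm hb ha hq (sub_lt_self 1 hp)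
  have hcut := shear_image_coordSimplex_erase (s := s) hab.symm hb ha hq (sub_lt_self 1 hp)
  rw [sub_sub_cancel] at hright hcut
  have hunion : matVec (shear a b p (1 - p)) '' coordSimplex s I ∪
      matVec (shear b a (1 - p) p) '' coordSimplex s I = coordSimplex s I := by
    rw [hleft, hright, ← inter_union_distrib_left]
    exact inter_eq_left.2 fun w _ => le_total ((1 - p) * w a) (p * w b)
  have hinter : matVec (shear a b p (1 - p)) '' coordSimplex s I ∩
      matVec (shear b a (1 - p) p) '' coordSimplex s I =
        matVec (shear b a (1 - p) p) '' coordSimplex s (I.erase a) := by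
    rw [hleft, hright, hcut, ← inter_inter_distrib_left]
    congr 1
    ext w
    exact ⟨fun h => le_antisymm h.2 h.1, fun h => ⟨h.ge, h.le⟩⟩
  have hval := hV.normalizedValue hD _ _ (hS.matVec_image (shear a b p (1 - p)))
    (hS.matVec_image (shear b a (1 - p) p)) (hunion.symm ▸ hS)
    (hinter.symm ▸ hF.matVec_image (shear b a (1 - p) p))
  have hdet := det_shear hab p (1 - p)
  have hdet' := det_shear hab.symm (1 - p) p
  rwa [hunion, hinter, normalizedValue_matVec_image hY hD (hdet.trans_ne hp.ne') hS,
    normalizedValue_matVec_image hY hD (hdet'.trans_ne hq.ne') hS,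
    normalizedValue_matVec_image hY hD (hdet'.trans_ne hq.ne') hF, hdet, hdet'] at hval

/-- The coordinates `a`, `b` and `c` of the splitting equation form a linear system for the four
values involved. -/
lemma normalizedValue_split_apply (hn : 2 < n) (hY : IsPolySLCovariant Y) (hV : IsValuation Y)
    {D : ℝ} (hD : D ≠ 0) {a b c : Fin n} (hab : a ≠ b) (hca : c ≠ a) (hcb : c ≠ b) (ha : a ∈ I)
    (hb : b ∈ I) (hc : c ∈ I) (hS : IsConvexPolytope (coordSimplex s I))
    (hF : IsConvexPolytope (coordSimplex s (I.erase a))) {p q : ℝ} (hp : 0 < p) (hq : 0 < q)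
    (hpq : p + q = 1) :
    normalizedValue Y (D * q) (coordSimplex s I) c = q * normalizedValue Y D (coordSimplex s I) c ∧
      normalizedValue Y (D * q) (coordSimplex s (I.erase a)) c = 0 := by
  have hsplit := normalizedValue_split hY hV hD hab ha hb hS hF hp hq hpq
  have hDp : D * p ≠ 0 := mul_ne_zero hD hp.ne'
  have hDq : D * q ≠ 0 := mul_ne_zero hD hq.ne'
  have hbF : b ∈ I.erase a := Finset.mem_erase.2 ⟨hab.symm, hb⟩
  have hcF : c ∈ I.erase a := Finset.mem_erase.2 ⟨hca, hc⟩
  have at_a := congrArg (fun v : En n => v a) hsplit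
  have at_b := congrArg (fun v : En n => v b) hsplit
  have at_c := congrArg (fun v : En n => v c) hsplit
  simp only [PiLp.add_apply, matVec_shear_apply_left hab, matVec_shear_apply_right hab,
    matVec_shear_apply_left hab.symm, matVec_shear_apply_right hab.symm,
    matVec_shear_apply_of_ne hca hcb, matVec_shear_apply_of_ne hcb hca,
    normalizedValue_apply_eq hn hY hDp hS ha hc, normalizedValue_apply_eq hn hY hDp hS hb hc,
    normalizedValue_apply_eq hn hY hDq hS ha hc, normalizedValue_apply_eq hn hY hDq hS hb hc,
    normalizedValue_apply_eq hn hY hD hS ha hc, normalizedValue_apply_eq hn hY hD hS hb hc,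
    normalizedValue_apply_eq hn hY hDq hF hbF hcF,
    normalizedValue_apply_of_notMem hY hDq hF (Finset.notMem_erase a I)] at at_a at_b at_c
  obtain rfl : p = 1 - q := eq_sub_of_add_eq hpq
  have hright : normalizedValue Y (D * q) (coordSimplex s I) c =
      q * normalizedValue Y D (coordSimplex s I) c := by
    linear_combination at_a - (1 - q) * at_c
  exact ⟨hright, by linear_combination at_b + hright - (1 + q) * at_c⟩

lemma normalizedValue_mul_univ (hn : 2 < n) (hY : IsPolySLCovariant Y) (hV : IsValuation Y)
    (hs : ∀ J : Finset (Fin n), J.Nonempty → IsConvexPolytope (coordSimplex s J)) {D : ℝ}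
    (hD : D ≠ 0) {q : ℝ} (hq : 0 < q) (hq1 : q < 1) :
    normalizedValue Y (D * q) (coordSimplex s .univ) =
      q • normalizedValue Y D (coordSimplex s .univ) := by
  ext c
  obtain ⟨a, hac⟩ := exists_ne c
  obtain ⟨b, hba, hbc⟩ := Fin.exists_ne_and_ne_of_two_lt a c hn
  exact (normalizedValue_split_apply hn hY hV hD hba.symm hac.symm hbc.symm (Finset.mem_univ a)
    (Finset.mem_univ b) (Finset.mem_univ c) (hs _ Finset.univ_nonempty)
    (hs _ ⟨c, Finset.mem_erase.2 ⟨hac.symm, Finset.mem_univ c⟩⟩) (sub_pos.2 hq1) hq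
    (sub_add_cancel 1 q)).1

lemma normalizedValue_univ (hn : 2 < n) (hY : IsPolySLCovariant Y) (hV : IsValuation Y)
    (hs : ∀ J : Finset (Fin n), J.Nonempty → IsConvexPolytope (coordSimplex s J)) {D : ℝ}
    (hD : D ≠ 0) : normalizedValue Y D (coordSimplex s .univ) = |D| • Y (coordSimplex s .univ) := by
  have hpos {D : ℝ} (hD : 0 < D) :
      normalizedValue Y D (coordSimplex s .univ) =
        D • normalizedValue Y 1 (coordSimplex s .univ) := by
    rcases lt_trichotomy D 1 with hlt | rfl | hgt
    · simpa only [one_mul] using normalizedValue_mul_univ hn hY hV hs one_ne_zero hD hlt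
    · rw [one_smul]
    · have hinv := normalizedValue_mul_univ hn hY hV hs hD.ne' (inv_pos.2 hD)
        (inv_lt_one_of_one_lt₀ hgt)
      rw [mul_inv_cancel₀ hD.ne'] at hinv
      rw [hinv, smul_inv_smul₀ hD.ne']
  rw [← normalizedValue_one (Y := Y)]
  rcases hD.lt_or_gt with hneg | hDpos
  · rw [abs_of_neg hneg, ← hpos (neg_pos.2 hneg),
      normalizedValue_neg_univ hn hY hD (hs _ Finset.univ_nonempty)]
  · rw [abs_of_pos hDpos, hpos hDpos]

lemma normalizedValue_apply_eq_zero_of_nontrivial (hn : 2 < n) (hY : IsPolySLCovariant Y)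
    (hV : IsValuation Y)
    (hs : ∀ J : Finset (Fin n), J.Nonempty → IsConvexPolytope (coordSimplex s J)) {D : ℝ}
    (hD : D ≠ 0) {j b c : Fin n} (hj : j ∉ I) (hb : b ∈ I) (hc : c ∈ I) (hcb : c ≠ b) :
    normalizedValue Y D (coordSimplex s I) c = 0 := by
  have hface : (insert j I).erase j = I := Finset.erase_insert hj
  have hhalf := (normalizedValue_split_apply hn hY hV (mul_ne_zero hD two_ne_zero)
    (ne_of_mem_of_not_mem hb hj).symm (ne_of_mem_of_not_mem hc hj) hcb
    (Finset.mem_insert_self j I) (Finset.mem_insert_of_mem hb) (Finset.mem_insert_of_mem hc)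
    (hs _ (Finset.insert_nonempty j I)) (hface.symm ▸ hs I ⟨c, hc⟩)
    (inv_pos.2 two_pos) (inv_pos.2 two_pos) (by norm_num)).2
  rwa [hface, mul_inv_cancel_right₀ two_ne_zero] at hhalf

/-- A vertex has no two distinct indices to compare, so its value is read off from the splitting
equation of an edge at that vertex. -/
lemma normalizedValue_singleton_apply (hn : 2 < n) (hY : IsPolySLCovariant Y) (hV : IsValuation Y)
    (hs : ∀ J : Finset (Fin n), J.Nonempty → IsConvexPolytope (coordSimplex s J)) {D : ℝ}
    (hD : D ≠ 0) (c : Fin n) : normalizedValue Y D (coordSimplex s {c}) c = 0 := by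
  obtain ⟨a, hac⟩ := exists_ne c
  obtain ⟨b, hba, hbc⟩ := Fin.exists_ne_and_ne_of_two_lt a c hn
  have hb : b ∉ ({a, c} : Finset (Fin n)) := by simp [hba, hbc]
  have hface : ({a, c} : Finset (Fin n)).erase a = {c} := Finset.erase_insert (by simpa using hac)
  have edge {D : ℝ} (hD : D ≠ 0) : normalizedValue Y D (coordSimplex s {a, c}) = 0 := by
    ext i
    by_cases hi : i ∈ ({a, c} : Finset (Fin n))
    · rcases Finset.mem_insert.1 hi with rfl | hic
      · exact normalizedValue_apply_eq_zero_of_nontrivial hn hY hV hs hD hb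
          (Finset.mem_insert_of_mem (Finset.mem_singleton_self c)) hi hac
      · obtain rfl := Finset.mem_singleton.1 hic
        exact normalizedValue_apply_eq_zero_of_nontrivial hn hY hV hs hD hb
          (Finset.mem_insert_self _ _) hi hac.symm
    · exact normalizedValue_apply_of_notMem hY hD (hs _ (Finset.insert_nonempty _ _)) hi
  have hsplit := normalizedValue_split hY hV (mul_ne_zero hD two_ne_zero) hac
    (Finset.mem_insert_self a {c}) (Finset.mem_insert_of_mem (Finset.mem_singleton_self c))
    (hs _ (Finset.insert_nonempty _ _)) (hface.symm ▸ hs _ (Finset.singleton_nonempty c))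
    (inv_pos.2 two_pos) (inv_pos.2 two_pos) (by norm_num)
  rw [hface, mul_inv_cancel_right₀ two_ne_zero, edge hD,
    edge (mul_ne_zero hD two_ne_zero)] at hsplit
  have at_c := congrArg (fun v : En n => v c) hsplit
  simpa [matVec_shear_apply_left hac.symm, matVec_shear_apply_right hac] using at_c

lemma normalizedValue_eq_zero_of_ne_univ (hn : 2 < n) (hY : IsPolySLCovariant Y)
    (hV : IsValuation Y)
    (hs : ∀ J : Finset (Fin n), J.Nonempty → IsConvexPolytope (coordSimplex s J)) {D : ℝ}
    (hD : D ≠ 0) (hS : IsConvexPolytope (coordSimplex s I)) (hI : I ≠ .univ) :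
    normalizedValue Y D (coordSimplex s I) = 0 := by
  obtain ⟨j, hj⟩ : ∃ j, j ∉ I := by simpa [Finset.eq_univ_iff_forall] using hI
  ext c
  by_cases hc : c ∈ I
  · by_cases hb : ∃ b ∈ I, c ≠ b
    · obtain ⟨b, hb, hcb⟩ := hb
      exact normalizedValue_apply_eq_zero_of_nontrivial hn hY hV hs hD hj hb hc hcb
    · push Not at hb
      obtain rfl : I = {c} := Finset.eq_singleton_iff_unique_mem.2 ⟨hc, fun x hx => (hb x hx).symm⟩
      exact normalizedValue_singleton_apply hn hY hV hs hD c
  · exact normalizedValue_apply_of_notMem hY hD hS hc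

end Splitting

end SLCovariance

section LinearImages

variable {n : ℕ} {Y : Set (En n) → En n} {s : Set ℝ} {I : Finset (Fin n)}

lemma apply_matVec_image_coordSimplex_univ (hn : 2 < n) (hY : IsPolySLCovariant Y)
    (hV : IsValuation Y)
    (hs : ∀ J : Finset (Fin n), J.Nonempty → IsConvexPolytope (coordSimplex s J))
    {A : Matrix (Fin n) (Fin n) ℝ} (hA : A.det ≠ 0) :
    Y (matVec A '' coordSimplex s .univ) = |A.det| • matVec A (Y (coordSimplex s .univ)) := by
  have : Nontrivial (Fin n) := Fin.nontrivial_iff_two_le.2 hn.le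
  rw [← normalizedValue_one (Y := Y), normalizedValue_matVec_image hY one_ne_zero hA
    (hs _ Finset.univ_nonempty), one_mul, normalizedValue_univ hn hY hV hs hA]
  exact map_smul (Matrix.toEuclideanLin A) _ _

lemma apply_matVec_image_coordSimplex_of_ne_univ (hn : 2 < n) (hY : IsPolySLCovariant Y)
    (hV : IsValuation Y)
    (hs : ∀ J : Finset (Fin n), J.Nonempty → IsConvexPolytope (coordSimplex s J))
    (hS : IsConvexPolytope (coordSimplex s I)) (hI : I ≠ .univ)
    {A : Matrix (Fin n) (Fin n) ℝ} (hA : A.det ≠ 0) : Y (matVec A '' coordSimplex s I) = 0 := by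
  have : Nontrivial (Fin n) := Fin.nontrivial_iff_two_le.2 hn.le
  rw [← normalizedValue_one (Y := Y), normalizedValue_matVec_image hY one_ne_zero hA hS, one_mul,
    normalizedValue_eq_zero_of_ne_univ hn hY hV hs hA hS hI]
  exact map_zero (Matrix.toEuclideanLin A)

end LinearImages

section CoordSimplexHull

variable {n : ℕ} (I : Finset (Fin n))

lemma convex_coordSimplex {s : Set ℝ} (hs : Convex ℝ s) : Convex ℝ (coordSimplex s I) := by
  rintro v ⟨hv0, hvI, hvs⟩ w ⟨hw0, hwI, hws⟩ p q hp hq hpq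
  refine ⟨fun i => add_nonneg (mul_nonneg hp (hv0 i)) (mul_nonneg hq (hw0 i)),
    fun i hi => by simp [hvI i hi, hwI i hi], ?_⟩
  have hsum : ∑ i, (p • v + q • w) i = p • ∑ i, v i + q • ∑ i, w i := by
    simp [Finset.sum_add_distrib, Finset.mul_sum]
  exact hsum ▸ hs hvs hws hp hq hpq

lemma single_mem_coordSimplex {s : Set ℝ} (hs : 1 ∈ s) {i : Fin n} (hi : i ∈ I) :
    EuclideanSpace.single i 1 ∈ coordSimplex s I := by
  refine ⟨fun j => ?_, fun j hj => ?_, by simpa using hs⟩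
  · rcases eq_or_ne j i with rfl | hji <;> simp [*]
  · simp [(ne_of_mem_of_not_mem hi hj).symm]

lemma coordSimplex_one :
    coordSimplex {1} I = convexHull ℝ ((EuclideanSpace.single · (1 : ℝ)) '' (I : Set (Fin n))) := by
  refine Subset.antisymm (fun w ⟨hw0, hwI, hw1⟩ => ?_) (convexHull_min ?_ ?_)
  · have hsum : ∑ i ∈ I, w i = 1 :=
      (Finset.sum_subset I.subset_univ fun i _ hi => hwI i hi).trans hw1
    have hdecomp : ∑ i ∈ I, w i • EuclideanSpace.single i (1 : ℝ) = w := by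
      rw [Finset.sum_subset I.subset_univ fun i _ hi => by rw [hwI i hi, zero_smul]]
      ext j
      simp [Pi.single_apply]
    rw [← hdecomp]
    exact (convex_convexHull ℝ _).sum_mem (fun i _ => hw0 i) hsum fun i hi =>
      subset_convexHull ℝ _ (mem_image_of_mem _ hi)
  · rintro _ ⟨i, hi, rfl⟩
    exact single_mem_coordSimplex I (mem_singleton 1) hi
  · exact convex_coordSimplex I (convex_singleton 1)

lemma coordSimplex_Icc : coordSimplex (Icc 0 1) I =
    convexHull ℝ (insert 0 ((EuclideanSpace.single · (1 : ℝ)) '' (I : Set (Fin n)))) := by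
  refine Subset.antisymm (fun w ⟨hw0, hwI, hw1⟩ => ?_) (convexHull_min (insert_subset ?_ ?_) ?_)
  · have hzero : (0 : En n) ∈ convexHull ℝ
        (insert 0 ((EuclideanSpace.single · (1 : ℝ)) '' (I : Set (Fin n)))) :=
      subset_convexHull ℝ _ (mem_insert _ _)
    rcases hw1.1.eq_or_lt with hsum | hsum
    · have hw : w = 0 := by
        ext i
        exact (Finset.sum_eq_zero_iff_of_nonneg fun i _ => hw0 i).1 hsum.symm i (Finset.mem_univ i)
      exact hw ▸ hzero
    · have hface : (∑ i, w i)⁻¹ • w ∈ coordSimplex {1} I := by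
        refine ⟨fun i => mul_nonneg (inv_nonneg.2 hsum.le) (hw0 i),
          fun i hi => by simp [hwI i hi], ?_⟩
        simp [← Finset.mul_sum, hsum.ne']
      rw [coordSimplex_one] at hface
      rw [← smul_inv_smul₀ hsum.ne' w]
      exact (convex_convexHull ℝ _).smul_mem_of_zero_mem hzero
        (convexHull_mono (subset_insert _ _) hface) hw1
  · exact ⟨fun i => le_rfl, fun i _ => rfl, by simp⟩
  · rintro _ ⟨i, hi, rfl⟩
    exact single_mem_coordSimplex I (right_mem_Icc.2 zero_le_one) hi
  · exact convex_coordSimplex I (convex_Icc 0 1)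

lemma isConvexPolytope_coordSimplex_one {I : Finset (Fin n)} (hI : I.Nonempty) :
    IsConvexPolytope (coordSimplex {1} I) := by
  rw [coordSimplex_one]
  exact isConvexPolytope_convexHull (I.finite_toSet.image _) (hI.to_set.image _)

lemma isConvexPolytope_coordSimplex_Icc : IsConvexPolytope (coordSimplex (Icc 0 1) I) := by
  rw [coordSimplex_Icc]
  exact isConvexPolytope_convexHull ((I.finite_toSet.image _).insert 0) (insert_nonempty _ _)

lemma sumExtend_inl {K V ι : Type*} [DivisionRing K] [AddCommGroup V] [Module K V] {t : ι → V}
    (ht : LinearIndependent K t) (i : ι) : Module.Basis.sumExtend ht (Sum.inl i) = t i := by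
  rw [Module.Basis.sumExtend, Module.Basis.reindex_apply, Module.Basis.extend_apply_self]
  rfl

lemma exists_matVec_single_eq {k : ℕ} {t : Fin k → En n} (ht : LinearIndependent ℝ t) :
    ∃ A : Matrix (Fin n) (Fin n) ℝ, A.det ≠ 0 ∧
      ∃ e : Fin k → Fin n, ∀ i, matVec A (EuclideanSpace.single (e i) 1) = t i := by
  have : Fintype (Fin k ⊕ Module.Basis.sumExtendIndex ht) :=
    FiniteDimensional.fintypeBasisIndex (Module.Basis.sumExtend ht)
  have hcard : Fintype.card (Fin k ⊕ Module.Basis.sumExtendIndex ht) = Fintype.card (Fin n) := by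
    rw [← Module.finrank_eq_card_basis (Module.Basis.sumExtend ht), finrank_euclideanSpace]
  let ε := Fintype.equivOfCardEq hcard
  let L := (EuclideanSpace.basisFun (Fin n) ℝ).toBasis.equiv
    ((Module.Basis.sumExtend ht).reindex ε) (Equiv.refl _)
  have hL : Matrix.toEuclideanLin (Matrix.toEuclideanLin.symm L.toLinearMap) = L.toLinearMap :=
    LinearEquiv.apply_symm_apply _ _
  refine ⟨Matrix.toEuclideanLin.symm L.toLinearMap, ?_, fun i => ε (Sum.inl i), fun i => ?_⟩
  · rw [← LinearMap.det_toLpLin, hL]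
    exact L.isUnit_det'.ne_zero
  · rw [matVec, hL, LinearEquiv.coe_coe, ← EuclideanSpace.basisFun_apply,
      ← OrthonormalBasis.coe_toBasis, Module.Basis.equiv_apply]
    simpa using sumExtend_inl ht i

end CoordSimplexHull

section Vanishing

variable {n : ℕ} {Y : Set (En n) → En n}

lemma apply_matVec_image_coordSimplex_eq_zero (hn : 2 < n) (hY : IsPolySLCovariant Y)
    (hV : IsValuation Y) {s : Set ℝ} {I : Finset (Fin n)}
    (hs : ∀ J : Finset (Fin n), J.Nonempty → IsConvexPolytope (coordSimplex s J))
    (hS : IsConvexPolytope (coordSimplex s I)) (hzero : Y (coordSimplex s .univ) = 0)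
    {A : Matrix (Fin n) (Fin n) ℝ} (hA : A.det ≠ 0) : Y (matVec A '' coordSimplex s I) = 0 := by
  rcases eq_or_ne I .univ with rfl | hI
  · rw [apply_matVec_image_coordSimplex_univ hn hY hV hs hA, hzero, matVec, map_zero, smul_zero]
  · exact apply_matVec_image_coordSimplex_of_ne_univ hn hY hV hs hS hI hA

lemma vanishesOnSimplices (hn : 2 < n) (hY : IsPolySLCovariant Y) (hV : IsValuation Y)
    (hface : Y (coordSimplex {1} .univ) = 0) (hcorner : Y (coordSimplex (Icc 0 1) .univ) = 0) :
    VanishesOnSimplices Y where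
  face t ht := by
    obtain ⟨A, hA, e, he⟩ := exists_matVec_single_eq ht
    have := apply_matVec_image_coordSimplex_eq_zero hn hY hV
      (fun J => isConvexPolytope_coordSimplex_one)
      (isConvexPolytope_coordSimplex_one (Finset.univ_nonempty.image e)) hface hA
    rwa [coordSimplex_one, matVec_image_convexHull, image_image, Finset.coe_image, image_image,
      Finset.coe_univ, image_univ, funext he] at this
  corner t ht := by
    obtain ⟨A, hA, e, he⟩ := exists_matVec_single_eq ht
    have := apply_matVec_image_coordSimplex_eq_zero hn hY hV
      (fun J _ => isConvexPolytope_coordSimplex_Icc J)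
      (isConvexPolytope_coordSimplex_Icc (Finset.univ.image e)) hcorner hA
    rwa [coordSimplex_Icc, matVec_image_convexHull, image_insert_eq, image_image, Finset.coe_image,
      image_image, Finset.coe_univ, image_univ, funext he, matVec, map_zero] at this

end Vanishing

section ClosedUnderCombinations

lemma IsValuation.add {E G : Type*} [AddCommGroup E] [Module ℝ E] [AddCommMonoid G]
    {Z Z' : Set E → G} (hZ : IsValuation Z) (hZ' : IsValuation Z') : IsValuation (Z + Z') := by
  intro P Q hP hQ hU hI
  simp only [Pi.add_apply]
  rw [add_add_add_comm, hZ P Q hP hQ hU hI, hZ' P Q hP hQ hU hI, add_add_add_comm]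

lemma IsValuation.const_smul {R E G : Type*} [AddCommGroup E] [Module ℝ E] [AddMonoid G]
    [DistribSMul R G] {Z : Set E → G} (hZ : IsValuation Z) (c : R) : IsValuation (c • Z) := by
  intro P Q hP hQ hU hI
  simp only [Pi.smul_apply]
  rw [← smul_add, hZ P Q hP hQ hU hI, smul_add]

lemma IsValuation.congr {E G : Type*} [AddCommGroup E] [Module ℝ E] [Add G] {Z Z' : Set E → G}
    (hZ : IsValuation Z) (h : ∀ Q, IsConvexPolytope Q → Z' Q = Z Q) : IsValuation Z' := by
  intro P Q hP hQ hU hI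
  rw [h P hP, h Q hQ, h _ hU, h _ hI, hZ P Q hP hQ hU hI]

variable {n : ℕ} {Y Y' : Set (En n) → En n}

lemma IsPolySLCovariant.add (hY : IsPolySLCovariant Y) (hY' : IsPolySLCovariant Y') :
    IsPolySLCovariant (Y + Y') := fun Q hQ A hA => by
  rw [Pi.add_apply, hY Q hQ A hA, hY' Q hQ A hA]
  exact (map_add (Matrix.toEuclideanLin A) _ _).symm

lemma IsPolySLCovariant.const_smul (hY : IsPolySLCovariant Y) (c : ℝ) :
    IsPolySLCovariant (c • Y) := fun Q hQ A hA => by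
  rw [Pi.smul_apply, hY Q hQ A hA]
  exact (map_smul (Matrix.toEuclideanLin A) c _).symm

lemma IsPolySLCovariant.congr (hY : IsPolySLCovariant Y) (h : ∀ Q, IsPolytope Q → Y' Q = Y Q) :
    IsPolySLCovariant Y' := fun Q hQ A hA => by
  rw [h Q hQ, h _ (IsConvexPolytope.matVec_image A hQ), hY Q hQ A hA]

end ClosedUnderCombinations

section Moments

variable {n : ℕ}

lemma integrableOn_id_of_isCompact {Q : Set (En n)} (hQ : IsCompact Q) :
    IntegrableOn (fun x : En n => x) Q :=
  continuous_id.continuousOn.integrableOn_compact hQ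

lemma isValuation_momentSet : IsValuation (momentSet (n := n)) := by
  intro P Q hP hQ _ _
  have hPm := hP.isCompact.isClosed.measurableSet
  have hQint := integrableOn_id_of_isCompact hQ.isCompact
  have hunion : momentSet (P ∪ Q) = momentSet P + momentSet (Q \ P) := by
    rw [← union_sdiff_self]
    exact setIntegral_union disjoint_sdiff_right (hQ.isCompact.isClosed.measurableSet.diff hPm)
      (integrableOn_id_of_isCompact hP.isCompact) (hQint.mono_set sdiff_subset)
  have hsplit : momentSet (P ∩ Q) + momentSet (Q \ P) = momentSet Q := by
    rw [inter_comm]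
    exact integral_inter_add_sdiff hPm hQint
  rw [hunion, ← hsplit]
  abel

lemma momentSet_matVec_image {A : Matrix (Fin n) (Fin n) ℝ} (hA : A.det ≠ 0) {Q : Set (En n)}
    (hQ : IsCompact Q) : momentSet (matVec A '' Q) = |A.det| • matVec A (momentSet Q) := by
  let L : En n →L[ℝ] En n := LinearMap.toContinuousLinearMap (Matrix.toEuclideanLin A)
  have hdet : L.det = A.det := LinearMap.det_toLpLin 2 A
  rw [momentSet, integral_image_eq_integral_abs_det_fderiv_smul volume hQ.isClosed.measurableSet
    (f := matVec A) (f' := fun _ => L) (fun x _ => L.hasFDerivWithinAt) (matVec_injective hA).injOn,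
    integral_smul, hdet]
  congr 1
  exact L.integral_comp_comm (integrableOn_id_of_isCompact hQ)

lemma isPolySLCovariant_momentSet : IsPolySLCovariant (momentSet (n := n)) :=
  fun Q hQ A hA => by
    rw [momentSet_matVec_image (hA.trans_ne one_ne_zero) (IsConvexPolytope.isCompact hQ), hA,
      abs_one, one_smul]

lemma isValuation_momentSet_convexHull_union_zero :
    IsValuation fun Q : Set (En n) => momentSet (convexHull ℝ (Q ∪ {0})) := by
  simp_rw [union_singleton]
  exact isValuation_momentSet.comp_convexHull_insert 0

lemma isPolySLCovariant_momentSet_convexHull_union_zero :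
    IsPolySLCovariant fun Q : Set (En n) => momentSet (convexHull ℝ (Q ∪ {0})) :=
  fun Q hQ A hA => by
    have himage : matVec A '' convexHull ℝ (Q ∪ {0}) = convexHull ℝ (matVec A '' Q ∪ {0}) := by
      rw [matVec_image_convexHull, image_union, image_singleton, matVec, map_zero]
    beta_reduce
    rw [← himage, union_singleton]
    exact isPolySLCovariant_momentSet _ (IsConvexPolytope.convexHull_insert hQ 0) A hA

lemma momentSet_eq_zero_of_sum_eq_one [Nonempty (Fin n)] {Q : Set (En n)}
    (hQ : ∀ x ∈ Q, ∑ i, x i = 1) : momentSet Q = 0 := by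
  let x₀ : En n := EuclideanSpace.single (Classical.arbitrary (Fin n)) 1
  let f : En n →ₗ[ℝ] ℝ := ∑ i, (EuclideanSpace.proj i : En n →L[ℝ] ℝ).toLinearMap
  have hf (x : En n) : f x = ∑ i, x i := by simp [f]
  have hx₀ : f x₀ = 1 := by simp [hf, x₀]
  have hmem (x : En n) : x ∈ AffineSubspace.mk' x₀ (LinearMap.ker f) ↔ ∑ i, x i = 1 := by
    rw [AffineSubspace.mem_mk', vsub_eq_sub, LinearMap.mem_ker, map_sub, hx₀, hf, sub_eq_zero]
  have htop : AffineSubspace.mk' x₀ (LinearMap.ker f) ≠ ⊤ := fun h => by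
    simpa using (hmem 0).1 (h ▸ AffineSubspace.mem_top ℝ (En n) 0)
  exact setIntegral_measure_zero _ <| measure_mono_null (fun x hx => (hmem x).2 (hQ x hx))
    (Measure.addHaar_affineSubspace volume _ htop)

lemma momentSet_apply_pos {Q : Set (En n)} (hQ : IsCompact Q) {i : Fin n}
    (hnonneg : ∀ x ∈ Q, 0 ≤ x i) {x : En n} (hx : x ∈ interior Q) (hxi : 0 < x i) :
    0 < momentSet Q i := by
  have hcoord : momentSet Q i = ∫ y in Q, y i :=
    ((EuclideanSpace.proj i : En n →L[ℝ] ℝ).integral_comp_comm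
      (integrableOn_id_of_isCompact hQ)).symm
  rw [hcoord, setIntegral_pos_iff_support_of_nonneg_ae
    ((ae_restrict_iff' hQ.isClosed.measurableSet).2 (.of_forall hnonneg))
    ((EuclideanSpace.proj i : En n →L[ℝ] ℝ).integrable_comp (integrableOn_id_of_isCompact hQ))]
  have hopen : IsOpen (interior Q ∩ {y : En n | 0 < y i}) :=
    isOpen_interior.inter (isOpen_lt continuous_const (by fun_prop))
  exact (hopen.measure_pos volume ⟨x, hx, hxi⟩).trans_le
    (measure_mono fun y hy => ⟨hy.2.ne', interior_subset hy.1⟩)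

lemma momentSet_coordSimplex_Icc_apply_pos (i : Fin n) :
    0 < momentSet (coordSimplex (Icc 0 1) .univ) i := by
  let x : En n := WithLp.toLp 2 fun _ => ((n : ℝ) + 1)⁻¹
  have hpos : 0 < ((n : ℝ) + 1)⁻¹ := by positivity
  refine momentSet_apply_pos (isConvexPolytope_coordSimplex_Icc _).isCompact (fun y hy => hy.1 i)
    (x := x) ?_ hpos
  refine interior_maximal (t := (⋂ j, {y : En n | 0 < y j}) ∩ {y | ∑ j, y j < 1}) ?_ ?_ ?_
  · rintro y ⟨hy0, hy1⟩
    have hy0 j : 0 ≤ y j := le_of_lt (mem_iInter.1 hy0 j)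
    exact ⟨hy0, fun j hj => absurd (Finset.mem_univ j) hj, Finset.sum_nonneg fun j _ => hy0 j,
      le_of_lt hy1⟩
  · exact (isOpen_iInter_of_finite fun j => isOpen_lt continuous_const (by fun_prop)).inter
      (isOpen_lt (by fun_prop) continuous_const)
  · refine ⟨mem_iInter.2 fun _ => hpos, ?_⟩
    simp only [mem_ofPred_eq, x, Finset.sum_const, Finset.card_univ, Fintype.card_fin, nsmul_eq_mul]
    rw [← div_eq_mul_inv, div_lt_one (by positivity)]
    exact lt_add_one _

lemma convexHull_coordSimplex_one_union_zero (I : Finset (Fin n)) :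
    convexHull ℝ (coordSimplex {1} I ∪ {0}) = coordSimplex (Icc 0 1) I := by
  rw [union_singleton, coordSimplex_one, convexHull_insert_convexHull, coordSimplex_Icc]

lemma convexHull_coordSimplex_Icc_union_zero (I : Finset (Fin n)) :
    convexHull ℝ (coordSimplex (Icc 0 1) I ∪ {0}) = coordSimplex (Icc 0 1) I := by
  rw [union_singleton, coordSimplex_Icc, convexHull_insert_convexHull, insert_idem]

end Moments

section Classification

variable {n : ℕ} {Y Y' : Set (En n) → En n}

lemma eq_of_eq_coordSimplex (hn : 2 < n) (hY : IsPolySLCovariant Y)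
    (hV : IsValuation Y) (hY' : IsPolySLCovariant Y') (hV' : IsValuation Y')
    (hface : Y (coordSimplex {1} .univ) = Y' (coordSimplex {1} .univ))
    (hcorner : Y (coordSimplex (Icc 0 1) .univ) = Y' (coordSimplex (Icc 0 1) .univ))
    {Q : Set (En n)} (hQ : IsConvexPolytope Q) : Y Q = Y' Q := by
  have hdiff : IsValuation (Y + (-1 : ℝ) • Y') := hV.add (hV'.const_smul _)
  have hzero := (vanishesOnSimplices hn (hY.add (hY'.const_smul (-1))) hdiff
    (by simp [hface]) (by simp [hcorner])).eq_zero hdiff hQ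
  rwa [Pi.add_apply, Pi.smul_apply, neg_one_smul, add_neg_eq_zero] at hzero

lemma exists_apply_coordSimplex_univ_eq_smul (hn : 2 < n)
    (hY : IsPolySLCovariant Y) {s : Set ℝ}
    (hS : IsConvexPolytope (coordSimplex s (.univ : Finset (Fin n)))) :
    ∃ c : ℝ, Y (coordSimplex s .univ) = c • momentSet (coordSimplex (Icc 0 1) .univ) := by
  have : Nontrivial (Fin n) := Fin.nontrivial_iff_two_le.2 hn.le
  have hconst {Z : Set (En n) → En n} (hZ : IsPolySLCovariant Z) {s : Set ℝ}
      (hS : IsConvexPolytope (coordSimplex s (.univ : Finset (Fin n)))) (i j : Fin n) :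
      Z (coordSimplex s .univ) i = Z (coordSimplex s .univ) j := by
    simpa only [normalizedValue_one] using normalizedValue_apply_eq hn hZ one_ne_zero hS
      (Finset.mem_univ i) (Finset.mem_univ j)
  let i₀ : Fin n := Classical.arbitrary _
  refine ⟨Y (coordSimplex s .univ) i₀ / momentSet (coordSimplex (Icc 0 1) .univ) i₀, ?_⟩
  ext i
  rw [PiLp.smul_apply, smul_eq_mul, hconst hY hS i i₀,
    hconst isPolySLCovariant_momentSet (isConvexPolytope_coordSimplex_Icc _) i i₀,
    div_mul_cancel₀ _ (momentSet_coordSimplex_Icc_apply_pos i₀).ne']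

/-- The operator `c₁ m(Q) + c₂ m([0, Q])`. -/
def momentCombination (n : ℕ) (c₁ c₂ : ℝ) : Set (En n) → En n :=
  c₁ • momentSet + c₂ • fun Q => momentSet (convexHull ℝ (Q ∪ {0}))

lemma isValuation_momentCombination (c₁ c₂ : ℝ) : IsValuation (momentCombination n c₁ c₂) :=
  (isValuation_momentSet.const_smul c₁).add
    (isValuation_momentSet_convexHull_union_zero.const_smul c₂)

lemma isPolySLCovariant_momentCombination (c₁ c₂ : ℝ) :
    IsPolySLCovariant (momentCombination n c₁ c₂) :=
  (isPolySLCovariant_momentSet.const_smul c₁).add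
    (isPolySLCovariant_momentSet_convexHull_union_zero.const_smul c₂)

lemma momentCombination_coordSimplex_one [Nonempty (Fin n)] (c₁ c₂ : ℝ) :
    momentCombination n c₁ c₂ (coordSimplex {1} .univ) =
      c₂ • momentSet (coordSimplex (Icc 0 1) .univ) := by
  simp only [momentCombination, Pi.add_apply, Pi.smul_apply, convexHull_coordSimplex_one_union_zero]
  rw [momentSet_eq_zero_of_sum_eq_one fun w hw => hw.2.2, smul_zero, zero_add]

lemma momentCombination_coordSimplex_Icc (c₁ c₂ : ℝ) :
    momentCombination n c₁ c₂ (coordSimplex (Icc 0 1) .univ) =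
      (c₁ + c₂) • momentSet (coordSimplex (Icc 0 1) .univ) := by
  simp only [momentCombination, Pi.add_apply, Pi.smul_apply, convexHull_coordSimplex_Icc_union_zero,
    add_smul]

end Classification

section Measurability

/-- The union of the segments joining the origin to the points of `K`. For convex `K` this is the
convex hull `[0, K]`; written as the image of `[0, 1] × K` under scaling it visibly depends
continuously on `K`. -/
def zeroJoin {E : Type*} [NormedAddCommGroup E] [NormedSpace ℝ E] (K : NonemptyCompacts E) :
    NonemptyCompacts E :=
  NonemptyCompacts.map (fun p : ℝ × E => p.1 • p.2) continuous_smul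
    ((⟨⟨Icc 0 1, isCompact_Icc⟩, nonempty_Icc.2 zero_le_one⟩ : NonemptyCompacts ℝ) ×ˢ K)

lemma continuous_zeroJoin {E : Type*} [NormedAddCommGroup E] [NormedSpace ℝ E] :
    Continuous (zeroJoin (E := E)) :=
  continuous_smul.nonemptyCompacts_map.comp
    (NonemptyCompacts.continuous_prod.comp (continuous_const.prodMk continuous_id))

lemma coe_zeroJoin {E : Type*} [NormedAddCommGroup E] [NormedSpace ℝ E] {K : NonemptyCompacts E}
    (hK : Convex ℝ (K : Set E)) : (zeroJoin K : Set E) = convexHull ℝ (K ∪ {0}) := by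
  ext x
  rw [union_singleton, mem_convexHull_insert_iff hK K.nonempty]
  simp only [segment_eq_image', mem_image, sub_zero, zero_add]
  change (∃ p ∈ Icc (0 : ℝ) 1 ×ˢ (K : Set E), p.1 • p.2 = x) ↔ _
  simp only [Prod.exists, mem_prod]
  tauto

variable {n : ℕ} {X : Type*} [TopologicalSpace X] [MeasurableSpace X] [OpensMeasurableSpace X]

lemma measurable_momentSet_comp {K : X → NonemptyCompacts (En n)} (hK : Continuous K) :
    Measurable fun x => momentSet (K x : Set (En n)) := by
  let graph : Set (X × En n) := {p | Metric.infDist p.2 (K p.1 : Set (En n)) = 0}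
  have hinfDist : Continuous fun p : En n × NonemptyCompacts (En n) =>
      Metric.infDist p.1 (p.2 : Set (En n)) := Metric.lipschitz_infDist.continuous
  have hgraph : MeasurableSet graph := (isClosed_eq (hinfDist.comp
    (continuous_snd.prodMk (hK.comp continuous_fst))) continuous_const).measurableSet
  have hmem (x : X) (v : En n) : (x, v) ∈ graph ↔ v ∈ (K x : Set (En n)) :=
    ((K x).isCompact.isClosed.mem_iff_infDist_zero (K x).nonempty).symm
  have hintegral (x : X) : momentSet (K x : Set (En n)) =
      ∫ v, graph.indicator Prod.snd (x, v) := by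
    rw [momentSet, ← integral_indicator (K x).isCompact.isClosed.measurableSet]
    have hsection : (K x : Set (En n)) = (fun v => (x, v)) ⁻¹' graph :=
      ext fun v => (hmem x v).symm
    rw [hsection]
    rfl
  simp_rw [hintegral]
  exact (measurable_snd.indicator hgraph).stronglyMeasurable.integral_prod_right'.measurable

lemma measurable_momentCombination (c₁ c₂ : ℝ) : Measurable[borel (PolySp n)] fun K : PolySp n =>
    momentCombination n c₁ c₂ (K.1 : Set (En n)) := by
  borelize (PolySp n)
  have hval : Continuous fun K : PolySp n => K.1 := continuous_subtype_val
  have hmoment := measurable_momentSet_comp hval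
  have hjoin := measurable_momentSet_comp (continuous_zeroJoin.comp hval)
  have hcoe (K : PolySp n) : (zeroJoin K.1 : Set (En n)) = convexHull ℝ (K.1 ∪ {0}) :=
    coe_zeroJoin (IsConvexPolytope.convex K.2)
  simp only [Function.comp_apply, hcoe] at hjoin
  exact (hmoment.const_smul c₁).add (hjoin.const_smul c₂)

end Measurability

theorem statement0_general (n : ℕ) (hn : 3 ≤ n) (Y : Set (En n) → En n) :
    (IsPolyValuation Y ∧ IsPolySLCovariant Y) ↔
    ∃ c₁ c₂ : ℝ, ∀ Q : Set (En n), IsPolytope Q →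
      Y Q = c₁ • momentSet Q + c₂ • momentSet (convexHull ℝ (Q ∪ {0})) := by
  have : Nontrivial (Fin n) := Fin.nontrivial_iff_two_le.2 (Nat.le_of_succ_le hn)
  refine ⟨fun ⟨hV, hY⟩ => ?_, fun ⟨c₁, c₂, h⟩ =>
    ⟨(isValuation_momentCombination c₁ c₂).congr h,
      (isPolySLCovariant_momentCombination c₁ c₂).congr h⟩⟩
  obtain ⟨c, hc⟩ := exists_apply_coordSimplex_univ_eq_smul hn hY
    (isConvexPolytope_coordSimplex_one Finset.univ_nonempty)
  obtain ⟨d, hd⟩ := exists_apply_coordSimplex_univ_eq_smul hn hY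
    (isConvexPolytope_coordSimplex_Icc Finset.univ)
  refine ⟨d - c, c, fun Q hQ => ?_⟩
  exact eq_of_eq_coordSimplex hn hY hV (isPolySLCovariant_momentCombination (d - c) c)
    (isValuation_momentCombination (d - c) c) (by rw [hc, momentCombination_coordSimplex_one])
    (by rw [hd, momentCombination_coordSimplex_Icc, sub_add_cancel]) hQ

/-- For `n ≥ 3`, an operator `Y : 𝒫ⁿ → ℝⁿ` is a Borel measurable
(w.r.t. the Hausdorff metric topology) and `SL(n)` covariant valuation if and only if
there exist constants `c₁, c₂ ∈ ℝ` with `Y Q = c₁ m(Q) + c₂ m([0,Q])` for all `Q ∈ 𝒫ⁿ`. -/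
theorem statement0 (n : ℕ) (hn : 3 ≤ n) (Y : Set (En n) → En n) :
    (@Measurable (PolySp n) (En n) (borel (PolySp n)) _
        (fun K : PolySp n => Y (K.1 : Set (En n))) ∧
      IsPolyValuation Y ∧ IsPolySLCovariant Y) ↔
    ∃ c₁ c₂ : ℝ, ∀ Q : Set (En n), IsPolytope Q →
      Y Q = c₁ • momentSet Q + c₂ • momentSet (convexHull ℝ (Q ∪ {0})) := by
  refine ⟨fun h => (statement0_general n hn Y).1 h.2, fun h =>
    ⟨?_, (statement0_general n hn Y).2 h⟩⟩
  obtain ⟨c₁, c₂, h⟩ := h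
  exact (funext fun K : PolySp n => h K.1 K.2) ▸ measurable_momentCombination c₁ c₂

end
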